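/- arXiv:1903.07529 — 5 statements merged into one kernel-verified Lean document; each statement's English description precedes it below -/
import Mathlib

section
/- Let 1 ≤ α ≤ β be countable ordinals and n, m positive integers. Let f : [0,1] → [0,1] be a unimodal, locally eventually onto map with critical point c such that ω(c) ≃ ω^{α+1}·n + 1 and 𝓘 ≃ ω^{β+1}·m + 1. Then there is a point v ∈ 𝓘 of limit type β+1 in 𝓘 (i.e. v lies in the (β+1)-st Cantor–Bendixson derivative of 𝓘 taken in lim←f) such that π₁(v) ∈ ω(c) lies in the second Cantor–Bendixson derivative of ω(c) taken in [0,1] (i.e. π₁(v) has limit type γ ≥ 2 in ω(c)). -/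
/-!
Write `X = ω(c)`, `𝓘` for the inhomogeneities and `F` for the derivative of `𝓘` of order `β + 1`.
Computing the derivatives of an ordinal segment (`cbDeriv_Iic`) shows that `F` is finite and
nonempty. It is invariant under the backward shift, so its points are periodic and their zeroth
coordinates form a finite set `P` (`topProj`) on which `f` is a bijection. If no point of `F` is
as required, then `P` misses the second derivative of `X`, so every point of `X \ P` close to `P` is
isolated in `X`.

A nonperiodic point `y` of the derivative of order `β` is backward asymptotic to `F`, because its
infinitely many backward shifts can only accumulate in `F`. Hence `yⱼ` is isolated in `X`, and
outside `P`, for all large `j` (`eventually_coord_isolated`). Such a `y` exists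
(`exists_nonperiodic`): points of the derivative of order `β` accumulate at `F`, and a periodic one
close to `F` would have an orbit made of isolated points of `X`, which is impossible for a proper
subset of an omega-limit set (`omegaLimitSet_subset_of_isolated`).

As `yⱼ` is isolated, points of the derivatives of order `γ < β` converging to `y` eventually agree
with `y` up to the index `j`, and then branch off at a later index (`exists_branch`). Shifting the
branching index to zero gives points `w` with `w₀ = yⱼ ∉ P` and `w₁ ≠ yⱼ₊₁`. As `j → ∞` and `γ`
exhausts `β`, they have a limit `u` in the derivative of order `β` with `u₀ ∈ P`. Because `c ∉ P`
and `f` is monotone on both sides of `c`, the branch survives in the limit: `u₁ ∉ P`. So `u` is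
nonperiodic, and a far coordinate of `u` is isolated in `X`; the points `w` near `u` share this
coordinate, whence `w₀ = u₀ ∈ P`, a contradiction (`top_contradiction`).
-/

open Set Filter

noncomputable section

/-- The unit interval `[0,1]` as a subtype of `ℝ`. -/
abbrev unitI : Type := Set.Icc (0 : ℝ) 1

/-- `f : [0,1] → [0,1]` is unimodal with critical point `c`: continuous, `c ∈ (0,1)`,
strictly increasing on `[0,c]` and strictly decreasing on `[c,1]`. -/
def Unimodal (f : unitI → unitI) (c : unitI) : Prop :=
  Continuous f ∧ 0 < (c : ℝ) ∧ (c : ℝ) < 1 ∧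
    StrictMonoOn f {x : unitI | x ≤ c} ∧ StrictAntiOn f {x : unitI | c ≤ x}

/-- `f` is locally eventually onto: for every `ε > 0` and every `x`, some iterate of `f`
maps the `ε`-ball about `x` (in `[0,1]`) onto all of `[0,1]`. -/
def LEO (f : unitI → unitI) : Prop :=
  ∀ ε : ℝ, 0 < ε → ∀ x : unitI, ∃ N : ℕ, f^[N] '' Metric.ball x ε = Set.univ

/-- The omega-limit set of `c` under `f`: `⋂ₙ closure {fᵐ(c) : m ≥ n}`. -/
def omegaLimitSet (f : unitI → unitI) (c : unitI) : Set unitI :=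
  ⋂ n : ℕ, closure {y : unitI | ∃ m : ℕ, n ≤ m ∧ f^[m] c = y}

/-- The inverse limit of `f`, as a subset of the product `ℕ → [0,1]`
(the subspace topology coincides with the topology induced by the usual metric). -/
def InvLim (f : unitI → unitI) : Set (ℕ → unitI) :=
  {x | ∀ i : ℕ, f (x (i + 1)) = x i}

/-- The set of inhomogeneities: points of the inverse limit all of whose
coordinates lie in the postcritical omega-limit set. -/
def Inhom (f : unitI → unitI) (c : unitI) : Set (InvLim f) :=
  {x | ∀ n : ℕ, (x : ℕ → unitI) n ∈ omegaLimitSet f c}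

/-- The ordinal space `{ξ : ξ ≤ o}` with its order topology. -/
def OrdSpace (o : Ordinal) : Type _ := Set.Iic o

instance (o : Ordinal) : LinearOrder (OrdSpace o) :=
  inferInstanceAs (LinearOrder (Set.Iic o))

instance (o : Ordinal) : TopologicalSpace (OrdSpace o) := Preorder.topology (OrdSpace o)

instance (o : Ordinal) : OrderTopology (OrdSpace o) := ⟨rfl⟩

/-- `X ≃ ω^γ·k + 1` in the sense of the paper: `X` is homeomorphic to the
ordinal space `{ξ : ξ ≤ o}` with its order topology. -/
def HomeoOrd (X : Type*) [TopologicalSpace X] (o : Ordinal) : Prop :=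
  Nonempty (X ≃ₜ OrdSpace o)

/-- The derived set of `A`: the set of accumulation points of `A` in the ambient space. -/
def dSet {X : Type*} [TopologicalSpace X] (A : Set X) : Set X :=
  {x | AccPt x (Filter.principal A)}

/-- The iterated Cantor–Bendixson derivatives of `A` (within the ambient space `X`):
`D(0) = A`, `D(γ+1)` is the derived set of `D(γ)`, and `D(λ) = ⋂_{γ<λ} D(γ)` at limits. -/
def cbDeriv {X : Type*} [TopologicalSpace X] (A : Set X) (o : Ordinal) : Set X :=
  Ordinal.limitRecOn o A (fun _ ih => dSet ih)
    (fun o _ ih => ⋂ (γ : Ordinal) (h : γ < o), ih γ h)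

/-! ### Cantor–Bendixson derivatives -/

section CantorBendixson

open Topology

variable {X Y : Type*} [TopologicalSpace X] [TopologicalSpace Y]

lemma cbDeriv_zero (A : Set X) : cbDeriv A 0 = A := by
  simp [cbDeriv]

lemma cbDeriv_add_one (A : Set X) (o : Ordinal) : cbDeriv A (o + 1) = dSet (cbDeriv A o) := by
  simp [cbDeriv]

lemma cbDeriv_limit (A : Set X) {o : Ordinal} (h : Order.IsSuccLimit o) :
    cbDeriv A o = ⋂ (γ : Ordinal) (_ : γ < o), cbDeriv A γ := by
  rw [cbDeriv, Ordinal.limitRecOn_limit _ _ _ _ h]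
  rfl

lemma dSet_mono {A B : Set X} (h : A ⊆ B) : dSet A ⊆ dSet B :=
  fun _ hx => AccPt.mono hx (Filter.principal_mono.2 h)

lemma dSet_subset {A : Set X} (h : IsClosed A) : dSet A ⊆ A :=
  fun x hx => isClosed_iff_accPt.1 h x hx

lemma isClosed_dSet [T1Space X] (A : Set X) : IsClosed (dSet A) :=
  isClosed_derivedSet A

lemma isClosed_cbDeriv [T1Space X] {A : Set X} (h : IsClosed A) (o : Ordinal) :
    IsClosed (cbDeriv A o) := by
  induction o using Ordinal.limitRecOn with
  | zero => rwa [cbDeriv_zero]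
  | add_one o _ => rw [cbDeriv_add_one]; exact isClosed_dSet _
  | limit o ho ih =>
    rw [cbDeriv_limit A ho]
    exact isClosed_iInter fun γ => isClosed_iInter fun hγ => ih γ hγ

lemma cbDeriv_anti [T1Space X] {A : Set X} (h : IsClosed A) {γ o : Ordinal} (hγ : γ ≤ o) :
    cbDeriv A o ⊆ cbDeriv A γ := by
  induction o using Ordinal.limitRecOn with
  | zero => rw [nonpos_iff_eq_zero.1 hγ]
  | add_one o ih =>
    rcases hγ.lt_or_eq with hlt | rfl
    · rw [cbDeriv_add_one]
      exact (dSet_subset (isClosed_cbDeriv h o)).trans (ih (Order.lt_add_one_iff.1 hlt))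
    · rfl
  | limit o ho ih =>
    rcases hγ.lt_or_eq with hlt | rfl
    · rw [cbDeriv_limit A ho]
      exact iInter₂_subset γ hlt
    · rfl

/-- A description of the positive derivatives which treats successors and limits alike. -/
lemma mem_cbDeriv_iff [T1Space X] {A : Set X} (h : IsClosed A) {o : Ordinal} (ho : o ≠ 0)
    {x : X} : x ∈ cbDeriv A o ↔ ∀ γ < o, x ∈ dSet (cbDeriv A γ) := by
  constructor
  · intro hx γ hγ
    rw [← cbDeriv_add_one]
    exact cbDeriv_anti h (Order.add_one_le_of_lt hγ) hx
  · intro hx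
    induction o using Ordinal.limitRecOn with
    | zero => exact absurd rfl ho
    | add_one o _ => rw [cbDeriv_add_one]; exact hx o (Order.lt_add_one_iff.2 le_rfl)
    | limit o hl _ =>
      rw [cbDeriv_limit A hl]
      exact mem_iInter₂.2 fun γ hγ => dSet_subset (isClosed_cbDeriv h γ) (hx γ hγ)

lemma cbDeriv_subset [T1Space X] {A : Set X} (h : IsClosed A) (o : Ordinal) :
    cbDeriv A o ⊆ A := by
  simpa [cbDeriv_zero] using cbDeriv_anti h (zero_le (a := o))

lemma dSet_mapsTo {g : X → Y} (hg : Continuous g) (hi : Function.Injective g) {A : Set X}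
    {B : Set Y} (h : MapsTo g A B) : MapsTo g (dSet A) (dSet B) := by
  intro x hx
  have h1 : AccPt (g x) (Filter.map g (𝓟 A)) := AccPt.map hx hg.continuousAt hi
  refine h1.mono ?_
  rw [Filter.map_principal]
  exact Filter.principal_mono.2 h.image_subset

lemma cbDeriv_mapsTo {g : X → Y} (hg : Continuous g) (hi : Function.Injective g) {A : Set X}
    {B : Set Y} (h : MapsTo g A B) (o : Ordinal) : MapsTo g (cbDeriv A o) (cbDeriv B o) := by
  induction o using Ordinal.limitRecOn with
  | zero => rwa [cbDeriv_zero, cbDeriv_zero]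
  | add_one o ih => rw [cbDeriv_add_one, cbDeriv_add_one]; exact dSet_mapsTo hg hi ih
  | limit o ho ih =>
    rw [cbDeriv_limit A ho, cbDeriv_limit B ho]
    intro x hx
    simp only [mem_iInter] at hx ⊢
    exact fun γ hγ => ih γ hγ (hx γ hγ)

lemma dSet_image {e : X → Y} (he : IsClosedEmbedding e) (A : Set X) :
    dSet (e '' A) = e '' dSet A := by
  apply Subset.antisymm
  · intro y hy
    have hyr : y ∈ range e := by
      have : y ∈ dSet (range e) := dSet_mono (image_subset_range e A) hy
      exact dSet_subset he.isClosed_range this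
    obtain ⟨x, rfl⟩ := hyr
    refine ⟨x, ?_, rfl⟩
    refine accPt_iff_nhds.2 fun U hU => ?_
    rw [he.isInducing.nhds_eq_comap] at hU
    obtain ⟨V, hV, hVU⟩ := hU
    obtain ⟨_, ⟨h1, z, hz, rfl⟩, h2⟩ := accPt_iff_nhds.1 hy V hV
    exact ⟨z, ⟨hVU h1, hz⟩, fun h => h2 (h ▸ rfl)⟩
  · exact (dSet_mapsTo he.continuous he.injective (mapsTo_image e A)).image_subset

lemma cbDeriv_image {e : X → Y} (he : IsClosedEmbedding e) (A : Set X) (o : Ordinal) :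
    cbDeriv (e '' A) o = e '' cbDeriv A o := by
  induction o using Ordinal.limitRecOn with
  | zero => rw [cbDeriv_zero, cbDeriv_zero]
  | add_one o ih => rw [cbDeriv_add_one, cbDeriv_add_one, ih, dSet_image he]
  | limit o ho ih =>
    apply Subset.antisymm
    · intro y hy
      have h0 : y ∈ cbDeriv (e '' A) 0 := by
        rw [cbDeriv_limit _ ho] at hy
        exact mem_iInter₂.1 hy 0 ho.bot_lt
      rw [cbDeriv_zero] at h0
      obtain ⟨x, -, rfl⟩ := h0
      refine ⟨x, ?_, rfl⟩
      rw [cbDeriv_limit _ ho] at hy ⊢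
      refine mem_iInter₂.2 fun γ hγ => ?_
      have := mem_iInter₂.1 hy γ hγ
      rw [ih γ hγ] at this
      exact (he.injective.mem_set_image).1 this
    · exact (cbDeriv_mapsTo he.continuous he.injective (mapsTo_image e A) o).image_subset

end CantorBendixson

/-! ### The derivatives of an ordinal segment -/

section OrdinalSpaces

open Ordinal Topology

/-- The points `ω ^ δ * s` accumulate exactly at the nonzero multiples of `ω ^ (δ + 1)`. -/
lemma accPt_multiples (o δ ξ : Ordinal) :
    ξ ∈ dSet {ζ : Ordinal | ζ ≤ o ∧ ω ^ δ ∣ ζ ∧ (δ = 0 ∨ ζ ≠ 0)} ↔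
      ξ ≤ o ∧ ω ^ (δ + 1) ∣ ξ ∧ ξ ≠ 0 := by
  have hpos : 0 < ω ^ δ := opow_pos δ omega0_pos
  change AccPt ξ (𝓟 _) ↔ _
  rw [SuccOrder.accPt_principal, isMin_iff_eq_bot, bot_eq_zero]
  constructor
  · rintro ⟨h0, h⟩
    have hq : ξ = ω ^ δ * (ξ / ω ^ δ) := by
      by_contra hne
      have hlt : ω ^ δ * (ξ / ω ^ δ) < ξ := lt_of_le_of_ne (mul_div_le _ _) (Ne.symm hne)
      obtain ⟨ζ, ⟨-, ⟨s, rfl⟩, -⟩, h1, h2⟩ := h _ hlt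
      have h3 : ξ / ω ^ δ < s := (mul_lt_mul_iff_right₀ hpos).1 h1
      have h4 : ξ < ω ^ δ * s := (lt_mul_iff_div_lt hpos.ne').2 h3
      exact lt_asymm h2 h4
    set q := ξ / ω ^ δ with hqdef
    have hlim : Order.IsSuccPrelimit q := by
      refine Order.isSuccPrelimit_of_succ_lt fun p hp => ?_
      have h1 : ω ^ δ * p < ξ := by rw [hq]; exact (mul_lt_mul_iff_right₀ hpos).2 hp
      obtain ⟨ζ, ⟨-, ⟨s, rfl⟩, -⟩, h2, h3⟩ := h _ h1
      rw [hq] at h3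
      exact lt_of_le_of_lt (Order.succ_le_of_lt ((mul_lt_mul_iff_right₀ hpos).1 h2))
        ((mul_lt_mul_iff_right₀ hpos).1 h3)
    refine ⟨?_, ?_, h0⟩
    · by_contra hlt
      obtain ⟨ζ, ⟨h1, -⟩, h2, -⟩ := h o (not_le.1 hlt)
      exact absurd h1 (not_le.2 h2)
    · rw [hq, opow_add_one]
      exact mul_dvd_mul_left _ (isSuccPrelimit_iff_omega0_dvd.1 hlim)
  · rintro ⟨ho, ⟨k, rfl⟩, h0⟩
    refine ⟨h0, fun η hη => ?_⟩
    have hk : k ≠ 0 := by rintro rfl; simp at h0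
    have hl : Order.IsSuccLimit (ω * k) :=
      isSuccLimit_mul_left isSuccLimit_omega0 (pos_iff_ne_zero.2 hk)
    rw [opow_add_one, mul_assoc] at hη ho ⊢
    obtain ⟨s, hs, hηs⟩ := (lt_mul_iff_of_isSuccLimit hl).1 hη
    have hlt : ω ^ δ * s < ω ^ δ * (ω * k) := (mul_lt_mul_iff_right₀ hpos).2 hs
    exact ⟨ω ^ δ * s, ⟨hlt.le.trans ho, dvd_mul_right _ _,
      Or.inr (pos_of_gt hηs).ne'⟩, hηs, hlt⟩

lemma cbDeriv_Iic (o γ : Ordinal) :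
    cbDeriv (Iic o) γ = {ζ : Ordinal | ζ ≤ o ∧ ω ^ γ ∣ ζ ∧ (γ = 0 ∨ ζ ≠ 0)} := by
  induction γ using Ordinal.limitRecOn with
  | zero => rw [cbDeriv_zero]; ext; simp
  | add_one γ ih =>
    rw [cbDeriv_add_one, ih]
    ext ξ
    rw [accPt_multiples]
    simp
  | limit γ hγ ih =>
    rw [cbDeriv_limit _ hγ]
    ext ξ
    simp only [mem_iInter, mem_ofPred_eq]
    constructor
    · intro h
      have h' : ∀ δ < γ, ξ ≤ o ∧ ω ^ δ ∣ ξ ∧ (δ = 0 ∨ ξ ≠ 0) := fun δ hδ => by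
        have := h δ hδ
        rwa [ih δ hδ] at this
      have h1 := h' 1 (one_lt_of_isSuccLimit hγ)
      refine ⟨h1.1, ?_, Or.inr (by simpa using h1.2.2)⟩
      -- The remainder of `ξ` modulo `ω ^ γ` is below some `ω ^ δ` with `δ < γ`, yet divisible by it.
      have hr : ξ % ω ^ γ < ω ^ γ := mod_lt _ (opow_pos γ omega0_pos).ne'
      obtain ⟨δ, hδ, hδr⟩ := (lt_opow_of_isSuccLimit omega0_ne_zero hγ).1 hr
      have hd : ω ^ δ ∣ ξ % ω ^ γ := by
        have hd2 : ω ^ δ ∣ ω ^ γ * (ξ / ω ^ γ) + ξ % ω ^ γ := by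
          rw [div_add_mod]; exact (h' δ hδ).2.1
        exact (dvd_add_iff ((opow_dvd_opow ω hδ.le).mul_right _)).1 hd2
      refine dvd_of_mod_eq_zero ?_
      by_contra hne
      exact absurd (le_of_dvd hne hd) (not_le.2 hδr)
    · rintro ⟨h1, h2, h3⟩ δ hδ
      rw [ih δ hδ]
      exact ⟨h1, (opow_dvd_opow ω hδ.le).trans h2, h3.imp (fun h => absurd h hγ.ne_bot) id⟩

/-- In a closed set homeomorphic to the segment `[0, ω ^ γ * m]`, `0 < m`, the derivative
of order `γ` is finite and nonempty. -/
lemma cbDeriv_of_homeoOrd {Y : Type*} [TopologicalSpace Y] {A : Set Y} (hA : IsClosed A)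
    (γ : Ordinal) (m : ℕ) (hm : 0 < m) (h : HomeoOrd A (ω ^ γ * m)) :
    (cbDeriv A γ).Finite ∧ (cbDeriv A γ).Nonempty := by
  obtain ⟨e⟩ := h
  have hpos : 0 < ω ^ γ := opow_pos γ omega0_pos
  let i : OrdSpace (ω ^ γ * m) → Ordinal := fun x => Subtype.val (p := (· ∈ Iic (ω ^ γ * m))) x
  have htop : (inferInstance : TopologicalSpace (OrdSpace (ω ^ γ * m)))
      = (instTopologicalSpaceSubtype : TopologicalSpace (Iic (ω ^ γ * (m : Ordinal)))) :=
    (OrderTopology.topology_eq_generate_intervals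
      (α := Iic (ω ^ γ * (m : Ordinal)))).symm
  have hi : IsClosedEmbedding i := by
    have := (isClosed_Iic (a := ω ^ γ * (m : Ordinal))).isClosedEmbedding_subtypeVal
    rw [← htop] at this
    exact this
  have hv : IsClosedEmbedding (Subtype.val : A → Y) := hA.isClosedEmbedding_subtypeVal
  have hie := hi.comp e.isClosedEmbedding
  have e1 : cbDeriv A γ = Subtype.val '' cbDeriv (univ : Set A) γ := by
    rw [← cbDeriv_image hv]; simp
  have e2 : cbDeriv (Iic (ω ^ γ * (m : Ordinal))) γ = (i ∘ e) '' cbDeriv (univ : Set A) γ := by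
    rw [← cbDeriv_image hie]
    congr 1
    rw [image_univ, e.surjective.range_comp]
    exact Subtype.range_val.symm
  rw [cbDeriv_Iic] at e2
  have hfin : {ζ : Ordinal | ζ ≤ ω ^ γ * m ∧ ω ^ γ ∣ ζ ∧ (γ = 0 ∨ ζ ≠ 0)}.Finite := by
    refine ((Set.finite_Iic m).image fun k : ℕ => ω ^ γ * (k : Ordinal)).subset ?_
    rintro _ ⟨h1, ⟨s, rfl⟩, -⟩
    have hs : s ≤ m := (mul_le_mul_iff_right₀ hpos).1 h1
    obtain ⟨k, rfl⟩ := lt_omega0.1 (hs.trans_lt (natCast_lt_omega0 m))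
    exact ⟨k, by simpa using hs, rfl⟩
  have hne : {ζ : Ordinal | ζ ≤ ω ^ γ * m ∧ ω ^ γ ∣ ζ ∧ (γ = 0 ∨ ζ ≠ 0)}.Nonempty :=
    ⟨ω ^ γ * m, le_rfl, dvd_mul_right _ _,
      Or.inr (mul_ne_zero hpos.ne' (by exact_mod_cast hm.ne'))⟩
  rw [e2] at hfin hne
  rw [e1]
  exact ⟨(hfin.of_finite_image hie.injective.injOn).image _, (image_nonempty.1 hne).image _⟩

end OrdinalSpaces

/-! ### Unimodal maps and the omega-limit set -/

section OmegaLimit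

open Topology

variable {f : unitI → unitI} {c : unitI}

/-- Two distinct points with the same image lie on different sides of the critical point. -/
lemma Unimodal.sides (hf : Unimodal f c) {a b : unitI} (hab : a ≠ b) (h : f a = f b) :
    (a ≤ c ∧ c ≤ b) ∨ (b ≤ c ∧ c ≤ a) := by
  obtain ⟨-, -, -, hm, ha⟩ := hf
  rcases le_total a c with h1 | h1 <;> rcases le_total b c with h2 | h2
  · exact absurd (hm.injOn h1 h2 h) hab
  · exact Or.inl ⟨h1, h2⟩
  · exact Or.inr ⟨h2, h1⟩
  · exact absurd (ha.injOn h1 h2 h) hab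

lemma Unimodal.finite_fiber (hf : Unimodal f c) (y : unitI) : {z | f z = y}.Finite := by
  obtain ⟨-, -, -, hm, ha⟩ := hf
  have h1 : ({z | f z = y} ∩ {x | x ≤ c}).Subsingleton := fun a h b h' =>
    hm.injOn h.2 h'.2 (h.1.trans h'.1.symm)
  have h2 : ({z | f z = y} ∩ {x | c ≤ x}).Subsingleton := fun a h b h' =>
    ha.injOn h.2 h'.2 (h.1.trans h'.1.symm)
  refine (h1.finite.union h2.finite).subset fun z hz => ?_
  exact (le_total z c).imp (fun h => ⟨hz, h⟩) (fun h => ⟨hz, h⟩)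

/-- A finite-to-one continuous map preserving `A` preserves the accumulation points of `A`. -/
lemma Unimodal.dSet_mapsTo (hf : Unimodal f c) {A : Set unitI} (hA : MapsTo f A A) :
    MapsTo f (dSet A) (dSet A) := by
  intro x hx
  refine accPt_iff_nhds.2 fun V hV => ?_
  have h1 : f ⁻¹' V ∈ 𝓝 x := hf.1.continuousAt hV
  have h2 : ({z | f z = f x} \ {x})ᶜ ∈ 𝓝 x :=
    ((hf.finite_fiber (f x)).subset sdiff_subset).isClosed.isOpen_compl.mem_nhds (by simp)
  obtain ⟨z, ⟨⟨hz1, hz2⟩, hzA⟩, hzx⟩ := accPt_iff_nhds.1 hx _ (inter_mem h1 h2)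
  exact ⟨f z, ⟨hz1, hA hzA⟩, fun h => hz2 ⟨h, hzx⟩⟩

lemma mem_omegaLimitSet {x : unitI} :
    x ∈ omegaLimitSet f c ↔ ∀ V ∈ 𝓝 x, ∀ n, ∃ m, n ≤ m ∧ f^[m] c ∈ V := by
  simp only [omegaLimitSet, mem_iInter, mem_closure_iff_nhds]
  constructor
  · intro h V hV n
    obtain ⟨_, hy, m, hm, rfl⟩ := h n V hV
    exact ⟨m, hm, hy⟩
  · intro h n V hV
    obtain ⟨m, hm, hy⟩ := h V hV n
    exact ⟨_, hy, m, hm, rfl⟩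

lemma isClosed_omegaLimitSet : IsClosed (omegaLimitSet f c) :=
  isClosed_iInter fun _ => isClosed_closure

lemma omegaLimitSet_mapsTo (hf : Continuous f) :
    MapsTo f (omegaLimitSet f c) (omegaLimitSet f c) := by
  intro x hx
  rw [mem_omegaLimitSet] at hx ⊢
  intro V hV n
  obtain ⟨m, hm, h⟩ := hx _ (hf.continuousAt hV) n
  exact ⟨m + 1, by omega, by rw [Function.iterate_succ_apply']; exact h⟩

/-- The orbit of `c` eventually stays in each open neighbourhood of its omega-limit set. -/
lemma eventually_mem_of_omegaLimitSet_subset {V : Set unitI} (hV : IsOpen V)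
    (h : omegaLimitSet f c ⊆ V) : ∀ᶠ m in atTop, f^[m] c ∈ V := by
  by_contra hcon
  have hfr : ∃ᶠ m in atTop, f^[m] c ∈ Vᶜ := not_eventually.1 hcon
  obtain ⟨x, hxV, hx⟩ := hV.isClosed_compl.isCompact.exists_mapClusterPt_of_frequently hfr
  refine hxV (h (mem_omegaLimitSet.2 fun W hW n => ?_))
  exact frequently_atTop.1 (mapClusterPt_iff_frequently.1 hx W hW) n

/-- A nonempty finite invariant set of isolated points exhausts the omega-limit set: once the orbit
of `c` comes close to it, it has nowhere else to go. -/
lemma omegaLimitSet_subset_of_isolated (hf : Continuous f) {O : Set unitI} (hO : O.Finite)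
    (hne : O.Nonempty) (hsub : O ⊆ omegaLimitSet f c) (hinv : MapsTo f O O)
    (hiso : ∀ x ∈ O, x ∉ dSet (omegaLimitSet f c)) : omegaLimitSet f c ⊆ O := by
  have hK : IsClosed (omegaLimitSet f c \ O) := by
    refine isClosed_iff_accPt.2 fun a ha => ⟨?_, fun haO => ?_⟩
    · exact dSet_subset isClosed_omegaLimitSet (dSet_mono sdiff_subset ha)
    · exact hiso a haO (dSet_mono sdiff_subset ha)
  obtain ⟨V, W, hVo, hWo, hOV, hKW, hVW⟩ :=
    SeparatedNhds.of_isCompact_isCompact hO.isCompact hK.isCompact disjoint_sdiff_right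
  have hV'o : IsOpen (V ∩ f ⁻¹' V) := hVo.inter (hVo.preimage hf)
  have hOV' : O ⊆ V ∩ f ⁻¹' V := fun x hx => ⟨hOV hx, hOV (hinv hx)⟩
  have hev : ∀ᶠ m in atTop, f^[m] c ∈ (V ∩ f ⁻¹' V) ∪ W := by
    refine eventually_mem_of_omegaLimitSet_subset (hV'o.union hWo) fun x hx => ?_
    by_cases hxO : x ∈ O
    · exact Or.inl (hOV' hxO)
    · exact Or.inr (hKW ⟨hx, hxO⟩)
  obtain ⟨M, hM⟩ := eventually_atTop.1 hev
  obtain ⟨o, ho⟩ := hne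
  obtain ⟨m, hmM, hm⟩ := mem_omegaLimitSet.1 (hsub ho) _ (hV'o.mem_nhds (hOV' ho)) M
  have hstay : ∀ k, m ≤ k → f^[k] c ∈ V ∩ f ⁻¹' V := by
    intro k hk
    induction k, hk using Nat.le_induction with
    | base => exact hm
    | succ k hk ih =>
      refine (hM (k + 1) (by omega)).resolve_right fun hW => ?_
      rw [Function.iterate_succ_apply'] at hW
      exact disjoint_left.1 hVW ih.2 hW
  intro x hx
  by_contra hxO
  obtain ⟨k, hk, hkW⟩ := mem_omegaLimitSet.1 hx W (hWo.mem_nhds (hKW ⟨hx, hxO⟩)) m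
  exact disjoint_left.1 hVW (hstay k hk).1 hkW

end OmegaLimit

/-! ### Backward orbits -/

section BackwardOrbits

open Topology

variable {f : unitI → unitI} {c : unitI}

/-- The backward shift `(x₀, x₁, …) ↦ (xⱼ, xⱼ₊₁, …)` of the inverse limit. -/
def invShift (j : ℕ) (x : InvLim f) : InvLim f :=
  ⟨fun i => x.1 (i + j), fun i => by
    have := x.2 (i + j)
    rwa [show i + j + 1 = i + 1 + j by omega] at this⟩

/-- A point of the inverse limit with a periodic sequence of coordinates. -/
def BwdPeriodic (x : InvLim f) : Prop := ∃ k, 0 < k ∧ ∀ n, x.1 (n + k) = x.1 n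

lemma continuous_coord (i : ℕ) : Continuous fun x : InvLim f => x.1 i :=
  (continuous_apply i).comp continuous_subtype_val

lemma invLim_coord (x : InvLim f) (n k : ℕ) : f^[k] (x.1 (n + k)) = x.1 n := by
  induction k with
  | zero => rfl
  | succ k ih => rw [Function.iterate_succ_apply, ← add_assoc, x.2 (n + k), ih]

lemma invLim_coord_eq {x y : InvLim f} {n i : ℕ} (h : x.1 n = y.1 n) (hi : i ≤ n) :
    x.1 i = y.1 i := by
  obtain ⟨k, rfl⟩ := Nat.exists_eq_add_of_le hi
  rw [← invLim_coord x i k, h, invLim_coord y i k]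

lemma continuous_invShift (j : ℕ) : Continuous (invShift (f := f) j) :=
  Continuous.subtype_mk (continuous_pi fun i => continuous_coord (i + j)) _

lemma injective_invShift (j : ℕ) : Function.Injective (invShift (f := f) j) := by
  intro x y h
  apply Subtype.ext
  funext i
  have : x.1 (i + j) = y.1 (i + j) := congrFun (congrArg Subtype.val h) i
  exact invLim_coord_eq this (by omega)

lemma isClosed_invLim (hf : Continuous f) : IsClosed (InvLim f) := by
  have : InvLim f = ⋂ i : ℕ, {x : ℕ → unitI | f (x (i + 1)) = x i} := by
    ext x; simp [InvLim]
  rw [this]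
  exact isClosed_iInter fun i =>
    isClosed_eq (hf.comp (continuous_apply (i + 1))) (continuous_apply i)

lemma isClosed_inhom : IsClosed (Inhom f c) := by
  have : Inhom f c = ⋂ i : ℕ, (fun x : InvLim f => x.1 i) ⁻¹' omegaLimitSet f c := by
    ext x; simp [Inhom]
  rw [this]
  exact isClosed_iInter fun i => isClosed_omegaLimitSet.preimage (continuous_coord i)

lemma cbDeriv_invShift (j : ℕ) {o : Ordinal} {x : InvLim f} (hx : x ∈ cbDeriv (Inhom f c) o) :
    invShift j x ∈ cbDeriv (Inhom f c) o :=
  cbDeriv_mapsTo (continuous_invShift j) (injective_invShift j) (B := Inhom f c)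
    (fun y (hy : ∀ n, y.1 n ∈ omegaLimitSet f c) n => hy (n + j)) o hx

lemma bwdPeriodic_of_eventually {x : InvLim f} {i k : ℕ} (hk : 0 < k)
    (h : ∀ n, i ≤ n → x.1 (n + k) = x.1 n) : BwdPeriodic x := by
  refine ⟨k, hk, fun n => ?_⟩
  have h1 := h (n + i) (by omega)
  rw [← invLim_coord x n i, ← h1, ← invLim_coord x (n + k) i,
    show n + k + i = n + i + k by omega]

lemma bwdPeriodic_of_invShift_eq {x : InvLim f} {i j : ℕ} (hij : i < j)
    (h : invShift i x = invShift j x) : BwdPeriodic x := by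
  refine bwdPeriodic_of_eventually (i := i) (k := j - i) (by omega) fun n hn => ?_
  have := congrFun (congrArg Subtype.val h) (n - i)
  simp only [invShift] at this
  rw [show n - i + i = n by omega, show n - i + j = n + (j - i) by omega] at this
  exact this.symm

lemma iterate_mem {P : Set unitI} (hP : MapsTo f P P) {p : unitI} (hp : p ∈ P) (k : ℕ) :
    f^[k] p ∈ P := hP.iterate k hp

lemma BwdPeriodic.coord_mem {x : InvLim f} (hx : BwdPeriodic x) {P : Set unitI}
    (hP : MapsTo f P P) {i : ℕ} (hi : x.1 i ∈ P) (j : ℕ) : x.1 j ∈ P := by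
  obtain ⟨k, hk, h⟩ := hx
  have hmul : ∀ s n, x.1 (n + s * k) = x.1 n := by
    intro s n
    induction s with
    | zero => simp
    | succ s ih => rw [← ih, ← h (n + s * k), add_assoc, Nat.succ_mul]
  have hle : j ≤ i + j * k := by nlinarith
  have h1 := invLim_coord x j (i + j * k - j)
  rw [show j + (i + j * k - j) = i + j * k by omega, hmul] at h1
  rw [← h1]
  exact iterate_mem hP hi _

lemma bwdPeriodic_of_forall_mem {x : InvLim f} {P : Set unitI} (hfin : P.Finite)
    (hinj : InjOn f P) (h : ∀ j, x.1 j ∈ P) : BwdPeriodic x := by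
  obtain ⟨i, -, j, -, hij, he⟩ :=
    infinite_univ.exists_lt_map_eq_of_mapsTo (t := P) (f := x.1) (fun j _ => h j) hfin
  refine bwdPeriodic_of_eventually (i := i) (k := j - i) (by omega) fun n hn => ?_
  induction n, hn using Nat.le_induction with
  | base => rw [show i + (j - i) = j by omega, he]
  | succ n hn ih =>
    refine hinj (h _) (h _) ?_
    rw [show n + 1 + (j - i) = n + (j - i) + 1 by omega, x.2, x.2, ih]

lemma eventually_coord_eq {x : InvLim f} {j : ℕ} (h : x.1 j ∉ dSet (omegaLimitSet f c)) :
    ∀ᶠ z in 𝓝 x, z ∈ Inhom f c → z.1 j = x.1 j := by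
  have h1 : ∀ᶠ a in 𝓝 (x.1 j), a ∈ omegaLimitSet f c → a = x.1 j := by
    have := mt accPt_iff_frequently.2 h
    rw [not_frequently] at this
    filter_upwards [this] with a ha haX
    by_contra hne
    exact ha ⟨hne, haX⟩
  filter_upwards [(continuous_coord j).continuousAt.eventually h1] with z hz hzI
  exact hz (hzI j)

end BackwardOrbits

/-! ### The top derivative of the inhomogeneities -/

section TopDerivative

open Topology

variable {f : unitI → unitI} {c : unitI} {β : Ordinal}

/-- The zeroth coordinates of the points in the top derivative of the inhomogeneities. -/
def topProj (f : unitI → unitI) (c : unitI) (β : Ordinal) : Set unitI :=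
  (fun x : InvLim f => x.1 0) '' cbDeriv (Inhom f c) (β + 1)

lemma bwdPeriodic_of_top (hF : (cbDeriv (Inhom f c) (β + 1)).Finite) {v : InvLim f}
    (hv : v ∈ cbDeriv (Inhom f c) (β + 1)) : BwdPeriodic v := by
  obtain ⟨i, -, j, -, hij, he⟩ := infinite_univ.exists_lt_map_eq_of_mapsTo
    (f := fun j => invShift j v) (fun j _ => cbDeriv_invShift j hv) hF
  exact bwdPeriodic_of_invShift_eq hij he

lemma coord_mem_topProj {v : InvLim f} (hv : v ∈ cbDeriv (Inhom f c) (β + 1)) (j : ℕ) :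
    v.1 j ∈ topProj f c β :=
  ⟨invShift j v, cbDeriv_invShift j hv, by simp [invShift]⟩

lemma topProj_mapsTo (hF : (cbDeriv (Inhom f c) (β + 1)).Finite) :
    MapsTo f (topProj f c β) (topProj f c β) := by
  rintro _ ⟨v, hv, rfl⟩
  obtain ⟨k, hk, h⟩ := bwdPeriodic_of_top hF hv
  have h1 : f (v.1 0) = v.1 (k - 1) := by
    rw [← h 0, ← v.2 (k - 1), show 0 + k = k - 1 + 1 by omega]
  simp only [h1]
  exact coord_mem_topProj hv _

lemma topProj_injOn (hF : (cbDeriv (Inhom f c) (β + 1)).Finite) :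
    InjOn f (topProj f c β) := by
  have hfin : (topProj f c β).Finite := hF.image _
  have hsurj : SurjOn f (topProj f c β) (topProj f c β) := by
    rintro _ ⟨v, hv, rfl⟩
    exact ⟨v.1 1, coord_mem_topProj hv 1, v.2 0⟩
  have hmaps := topProj_mapsTo hF
  have : Finite (topProj f c β) := hfin
  have hs := hmaps.restrict_surjective_iff.2 hsurj
  exact (hmaps.restrict_inj).1 (Finite.injective_iff_surjective.2 hs)

lemma topProj_subset : topProj f c β ⊆ omegaLimitSet f c := by
  rintro _ ⟨v, hv, rfl⟩
  exact cbDeriv_subset isClosed_inhom _ hv 0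

/-- The points of `ω(c)` close to `topProj` are isolated, provided that `topProj` misses the second
derivative of `ω(c)`. -/
lemma eventually_isolated
    (hP : ∀ p ∈ topProj f c β, p ∉ dSet (dSet (omegaLimitSet f c))) {p : unitI}
    (hp : p ∈ topProj f c β) :
    ∀ᶠ a in 𝓝 p, a ∉ topProj f c β → a ∉ dSet (omegaLimitSet f c) := by
  have := mt accPt_iff_frequently.2 (hP p hp)
  rw [not_frequently] at this
  filter_upwards [this] with a ha haP haX
  exact ha ⟨fun h => haP (h ▸ hp), haX⟩

/-- A nonperiodic point `y` of the derivative of order `β` is backward asymptotic to the top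
derivative: its backward shifts are distinct, so they accumulate only there. -/
lemma tendsto_topDeriv {y : InvLim f} (hy : y ∈ cbDeriv (Inhom f c) β) (hnp : ¬ BwdPeriodic y)
    {ι : Type*} {l : Filter ι} [l.NeBot] {n : ι → ℕ} (hn : Tendsto n l atTop) {q : InvLim f}
    (hq : Tendsto (fun i => invShift (n i) y) l (𝓝 q)) : q ∈ cbDeriv (Inhom f c) (β + 1) := by
  rw [cbDeriv_add_one]
  refine accPt_iff_frequently.2 ?_
  have hinj : Function.Injective fun j => invShift j y := by
    intro i j h
    by_contra hne
    rcases lt_or_gt_of_ne hne with hlt | hlt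
    · exact hnp (bwdPeriodic_of_invShift_eq hlt h)
    · exact hnp (bwdPeriodic_of_invShift_eq hlt h.symm)
  have hne : ∀ᶠ j in atTop, invShift j y ≠ q := by
    by_cases hex : ∃ j, invShift j y = q
    · obtain ⟨j, hj⟩ := hex
      filter_upwards [eventually_gt_atTop j] with i hi h
      exact hi.ne' (hinj (h.trans hj.symm))
    · exact Eventually.of_forall fun j hj => hex ⟨j, hj⟩
  refine hq.frequently (Eventually.frequently ?_)
  filter_upwards [hn.eventually hne] with i hi
  exact ⟨hi, cbDeriv_invShift _ hy⟩

/-- If `topProj` misses the second derivative of `ω(c)`, then the far coordinates of a nonperiodic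
point of the derivative of order `β` lie outside `topProj` and are isolated in `ω(c)`. -/
lemma eventually_coord_isolated (hf : Unimodal f c)
    (hF : (cbDeriv (Inhom f c) (β + 1)).Finite)
    (hP : ∀ p ∈ topProj f c β, p ∉ dSet (dSet (omegaLimitSet f c))) {y : InvLim f}
    (hy : y ∈ cbDeriv (Inhom f c) β) (hnp : ¬ BwdPeriodic y) :
    ∀ᶠ j in atTop, y.1 j ∉ topProj f c β ∧ y.1 j ∉ dSet (omegaLimitSet f c) := by
  have : CompactSpace (InvLim f) := isCompact_iff_compactSpace.1 (isClosed_invLim hf.1).isCompact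
  have h1 : ∀ᶠ j in atTop, y.1 j ∉ topProj f c β := by
    by_contra hcon
    refine hnp (bwdPeriodic_of_forall_mem (hF.image _) (topProj_injOn hF) fun j => ?_)
    obtain ⟨n, hn, hmem⟩ := frequently_atTop.1 (not_eventually.1 hcon) j
    rw [not_not] at hmem
    obtain ⟨k, rfl⟩ := Nat.exists_eq_add_of_le hn
    rw [← invLim_coord y j k]
    exact iterate_mem (topProj_mapsTo hF) hmem k
  have h2 : ∀ᶠ j in atTop, y.1 j ∉ topProj f c β → y.1 j ∉ dSet (omegaLimitSet f c) := by
    by_contra hcon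
    rw [not_eventually] at hcon
    have := frequently_iff_neBot.1 hcon
    obtain ⟨𝒰, h𝒰⟩ := Ultrafilter.exists_le (atTop ⊓
      𝓟 {j | ¬ (y.1 j ∉ topProj f c β → y.1 j ∉ dSet (omegaLimitSet f c))})
    obtain ⟨q, -, hq⟩ := isCompact_univ.ultrafilter_le_nhds
      (𝒰.map fun j => invShift j y) (by simp)
    have hq' : Tendsto (fun j => invShift j y) 𝒰 (𝓝 q) := hq
    have hqF := tendsto_topDeriv hy hnp (n := id) (h𝒰.trans inf_le_left) hq'
    have hc : Tendsto (fun j => y.1 j) 𝒰 (𝓝 (q.1 0)) := by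
      simpa [invShift, Function.comp_def] using ((continuous_coord 0).tendsto q).comp hq'
    have he := hc.eventually (eventually_isolated hP (coord_mem_topProj hqF 0))
    have hb := le_principal_iff.1 (h𝒰.trans inf_le_right)
    obtain ⟨j, hj1, hj2⟩ := (he.and hb).exists
    exact hj2 hj1
  filter_upwards [h1, h2] with j a b using ⟨a, b a⟩

/-- Close to a top point there are nonperiodic points of the derivative of order `β`: a periodic one
would consist of isolated points of `ω(c)`, and then its orbit would be all of `ω(c)`. -/
lemma exists_nonperiodic (hf : Unimodal f c)
    (hF : (cbDeriv (Inhom f c) (β + 1)).Finite) (hne : (cbDeriv (Inhom f c) (β + 1)).Nonempty)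
    (hP : ∀ p ∈ topProj f c β, p ∉ dSet (dSet (omegaLimitSet f c))) :
    ∃ y ∈ cbDeriv (Inhom f c) β, ¬ BwdPeriodic y := by
  by_contra! hper
  obtain ⟨v, hv⟩ := hne
  have hv' : AccPt v (𝓟 (cbDeriv (Inhom f c) β)) := by
    have := hv
    rw [cbDeriv_add_one] at this
    exact this
  have hmaps := topProj_mapsTo hF
  have hn1 := (continuous_coord 0).continuousAt.eventually
    (eventually_isolated hP (coord_mem_topProj hv 0))
  have hn2 : (cbDeriv (Inhom f c) (β + 1) \ {v})ᶜ ∈ 𝓝 v :=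
    (hF.subset sdiff_subset).isClosed.isOpen_compl.mem_nhds (by simp)
  obtain ⟨y, ⟨⟨hy1, hy2⟩, hyD⟩, hyv⟩ := accPt_iff_nhds.1 hv' _ (inter_mem hn1 hn2)
  have hyper := hper y hyD
  have hyX : ∀ j, y.1 j ∈ omegaLimitSet f c := cbDeriv_subset isClosed_inhom _ hyD
  have hyP : y.1 0 ∉ topProj f c β := by
    intro h0
    obtain ⟨w, hw, hw0⟩ := id h0
    refine hy2 ⟨?_, hyv⟩
    have : y = w := by
      apply Subtype.ext
      funext j
      induction j with
      | zero => exact hw0.symm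
      | succ j ih =>
        refine topProj_injOn hF (hyper.coord_mem hmaps h0 _) (coord_mem_topProj hw _) ?_
        rw [y.2, w.2, ih]
    rwa [this]
  have hiso : ∀ j, y.1 j ∉ dSet (omegaLimitSet f c) := fun j hj =>
    hy1 hyP (hyper.coord_mem (hf.dSet_mapsTo (omegaLimitSet_mapsTo hf.1)) hj 0)
  have hO : (range y.1).Finite := by
    obtain ⟨k, hk, h⟩ := hyper
    refine ((finite_Iio k).image y.1).subset ?_
    rintro _ ⟨j, rfl⟩
    refine ⟨j % k, Nat.mod_lt _ hk, ?_⟩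
    exact (Function.Periodic.map_mod_nat h j)
  have hinv : MapsTo f (range y.1) (range y.1) := by
    rintro _ ⟨j, rfl⟩
    obtain ⟨k, hk, h⟩ := hyper
    refine ⟨j + k - 1, ?_⟩
    rw [← h j, ← y.2 (j + k - 1), show j + k - 1 + 1 = j + k by omega]
  have hsub := omegaLimitSet_subset_of_isolated hf.1 hO (range_nonempty _)
    (range_subset_iff.2 hyX) hinv (by rintro _ ⟨j, rfl⟩; exact hiso j)
  obtain ⟨j, hj⟩ := hsub (topProj_subset (coord_mem_topProj hv 0))
  exact hyP (hyper.coord_mem hmaps (i := j) (hj ▸ coord_mem_topProj hv 0) 0)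

/-- Arbitrarily far out, a nonperiodic point `y` of the derivative of order `β` is left by other
backward orbits: they reach `yⱼ` through the preimage different from `yⱼ₊₁`. -/
lemma exists_branch (hf : Unimodal f c) (hβ : β ≠ 0)
    (hF : (cbDeriv (Inhom f c) (β + 1)).Finite)
    (hP : ∀ p ∈ topProj f c β, p ∉ dSet (dSet (omegaLimitSet f c))) {y : InvLim f}
    (hy : y ∈ cbDeriv (Inhom f c) β) (hnp : ¬ BwdPeriodic y) {γ : Ordinal} (hγ : γ < β) (N : ℕ) :
    ∃ w ∈ cbDeriv (Inhom f c) γ, ∃ j, N ≤ j ∧ w.1 0 = y.1 j ∧ w.1 1 ≠ y.1 (j + 1) ∧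
      y.1 j ∉ topProj f c β := by
  obtain ⟨J, hJ⟩ := eventually_atTop.1 (eventually_coord_isolated hf hF hP hy hnp)
  have hacc : AccPt y (𝓟 (cbDeriv (Inhom f c) γ)) :=
    (mem_cbDeriv_iff isClosed_inhom hβ).1 hy γ hγ
  obtain ⟨z, ⟨hz, hzD⟩, hzy⟩ := accPt_iff_nhds.1 hacc _
    (eventually_coord_eq (c := c) (hJ (max N J) (le_max_right _ _)).2)
  have hzN : z.1 (max N J) = y.1 (max N J) := hz (cbDeriv_subset isClosed_inhom _ hzD)
  have hex : ∃ n, z.1 n ≠ y.1 n := by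
    by_contra! h
    exact hzy (Subtype.ext (funext h))
  classical
  obtain ⟨n, hn, hmin⟩ : ∃ n, z.1 n ≠ y.1 n ∧ ∀ i < n, z.1 i = y.1 i :=
    ⟨Nat.find hex, Nat.find_spec hex, fun i hi => not_not.1 (Nat.find_min hex hi)⟩
  have hlt : max N J < n := by
    by_contra hle
    exact hn (invLim_coord_eq hzN (not_lt.1 hle))
  obtain ⟨j, rfl⟩ : ∃ j, n = j + 1 := ⟨n - 1, by omega⟩
  have hj : max N J ≤ j := by omega
  refine ⟨invShift j z, cbDeriv_invShift j hzD, j, (le_max_left _ _).trans hj, ?_, ?_,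
    (hJ j ((le_max_right _ _).trans hj)).1⟩
  · simpa [invShift] using hmin j (by omega)
  · simpa [invShift, add_comm] using hn

/-- The top derivative cannot project into the complement of the second derivative of `ω(c)`. -/
lemma top_contradiction (hf : Unimodal f c) (hβ : β ≠ 0)
    (hF : (cbDeriv (Inhom f c) (β + 1)).Finite) (hne : (cbDeriv (Inhom f c) (β + 1)).Nonempty)
    (hP : ∀ p ∈ topProj f c β, p ∉ dSet (dSet (omegaLimitSet f c))) : False := by
  have : CompactSpace (InvLim f) := isCompact_iff_compactSpace.1 (isClosed_invLim hf.1).isCompact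
  obtain ⟨y, hy, hnp⟩ := exists_nonperiodic hf hF hne hP
  have hmaps := topProj_mapsTo hF
  have hfin : (topProj f c β).Finite := hF.image _
  -- A periodic critical point would make `ω(c)` finite and contained in `topProj`.
  have hc : c ∉ topProj f c β := by
    intro hc
    refine hnp (bwdPeriodic_of_forall_mem hfin (topProj_injOn hF) fun j => ?_)
    have hyj : y.1 j ∈ omegaLimitSet f c := cbDeriv_subset isClosed_inhom _ hy j
    by_contra hcon
    obtain ⟨m, -, hm⟩ := mem_omegaLimitSet.1 hyj _
      (hfin.isClosed.isOpen_compl.mem_nhds hcon) 0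
    exact hm (iterate_mem hmaps hc m)
  have : Nonempty (Iio β) := ⟨⟨0, pos_iff_ne_zero.2 hβ⟩⟩
  have hbr := fun i : Iio β × ℕ => exists_branch hf hβ hF hP hy hnp i.1.2 i.2
  choose w hwD n hn hw0 hw1 hyn using hbr
  -- Along an ultrafilter converging to infinity both branches have limits, `u` and `q`.
  let 𝒰 : Ultrafilter (Iio β × ℕ) := Ultrafilter.of atTop
  have h𝒰 : (𝒰 : Filter (Iio β × ℕ)) ≤ atTop := Ultrafilter.of_le _
  obtain ⟨u, -, hu⟩ := isCompact_univ.ultrafilter_le_nhds (𝒰.map w) (by simp)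
  obtain ⟨q, -, hq⟩ := isCompact_univ.ultrafilter_le_nhds
    (𝒰.map fun i => invShift (n i) y) (by simp)
  replace hu : Tendsto w 𝒰 (𝓝 u) := hu
  replace hq : Tendsto (fun i => invShift (n i) y) 𝒰 (𝓝 q) := hq
  have hntop : Tendsto n 𝒰 atTop := by
    have h2 : Tendsto (fun i : Iio β × ℕ => i.2) atTop atTop := by
      rw [← prod_atTop_atTop_eq]; exact tendsto_snd
    exact (tendsto_atTop_mono hn h2).mono_left h𝒰
  have hqF := tendsto_topDeriv hy hnp hntop hq
  have hu' := fun k => ((continuous_coord k).tendsto u).comp hu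
  have hq' := fun k => ((continuous_coord k).tendsto q).comp hq
  have hu0 : u.1 0 = q.1 0 := by
    refine tendsto_nhds_unique (hu' 0) ((hq' 0).congr fun i => ?_)
    simp [invShift, hw0]
  have hu0P : u.1 0 ∈ topProj f c β := hu0 ▸ coord_mem_topProj hqF 0
  have hwu : ∀ i, (w i).1 0 ≠ u.1 0 := fun i h => hyn i (by rw [← hw0, h]; exact hu0P)
  have hsides : (u.1 1 ≤ c ∧ c ≤ q.1 1) ∨ (q.1 1 ≤ c ∧ c ≤ u.1 1) := by
    have hcl : IsClosed {p : unitI × unitI | (p.1 ≤ c ∧ c ≤ p.2) ∨ (p.2 ≤ c ∧ c ≤ p.1)} :=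
      ((isClosed_Iic.preimage continuous_fst).inter
        (isClosed_Ici.preimage continuous_snd)).union
      ((isClosed_Iic.preimage continuous_snd).inter
        (isClosed_Ici.preimage continuous_fst))
    refine hcl.mem_of_tendsto ((hu' 1).prodMk_nhds (hq' 1)) (Eventually.of_forall fun i => ?_)
    refine hf.sides ?_ ?_
    · simpa [invShift, add_comm] using hw1 i
    · have h1 := (w i).2 0
      have h2 := (invShift (n i) y).2 0
      simp only [zero_add] at h1 h2
      simp only [Function.comp_apply, h1, h2, hw0]
      simp [invShift]
  have hu1P : u.1 1 ∉ topProj f c β := by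
    intro h1
    have he : u.1 1 = q.1 1 := by
      refine topProj_injOn hF h1 (coord_mem_topProj hqF 1) ?_
      have a1 := u.2 0
      have a2 := q.2 0
      simp only [zero_add] at a1 a2
      rw [a1, a2, hu0]
    rw [← he] at hsides
    have : u.1 1 = c := by
      rcases hsides with h | h
      · exact le_antisymm h.1 h.2
      · exact le_antisymm h.1 h.2
    exact hc (this ▸ h1)
  have hunp : ¬ BwdPeriodic u := fun h => hu1P (h.coord_mem hmaps hu0P 1)
  have huD : u ∈ cbDeriv (Inhom f c) β := by
    refine (mem_cbDeriv_iff isClosed_inhom hβ).2 fun γ hγ => ?_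
    refine accPt_iff_frequently.2 (hu.frequently (Eventually.frequently ?_))
    filter_upwards [h𝒰 (mem_atTop ((⟨γ, hγ⟩, 0) : Iio β × ℕ))] with i hi
    exact ⟨fun h => hwu i (by rw [h]), cbDeriv_anti isClosed_inhom hi.1 (hwD i)⟩
  -- A far coordinate of `u` is isolated in `ω(c)`, so `w i` shares it, and with it all earlier ones.
  obtain ⟨j, -, hj⟩ := (eventually_coord_isolated hf hF hP huD hunp).exists
  obtain ⟨i, hi⟩ := (hu.eventually (eventually_coord_eq (c := c) hj)).exists
  exact hwu i (invLim_coord_eq (hi (cbDeriv_subset isClosed_inhom _ (hwD i))) (Nat.zero_le j))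

end TopDerivative

theorem stmt11 (α β : Ordinal) (hα1 : 1 ≤ α) (hαβ : α ≤ β)
    (hαc : α.card ≤ Cardinal.aleph0) (hβc : β.card ≤ Cardinal.aleph0)
    (n m : ℕ) (hn : 0 < n) (hm : 0 < m)
    (f : unitI → unitI) (c : unitI) (hf : Unimodal f c) (hleo : LEO f)
    (homega : HomeoOrd (omegaLimitSet f c) (Ordinal.omega0 ^ (α + 1) * n))
    (hinhom : HomeoOrd (Inhom f c) (Ordinal.omega0 ^ (β + 1) * m)) :
    ∃ v : InvLim f, v ∈ Inhom f c ∧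
      v ∈ cbDeriv (Inhom f c) (β + 1) ∧
      (v : ℕ → unitI) 1 ∈ cbDeriv (omegaLimitSet f c) 2 := by
  have hβ : β ≠ 0 := (zero_lt_one.trans_le (hα1.trans hαβ)).ne'
  obtain ⟨hF, hne⟩ := cbDeriv_of_homeoOrd isClosed_inhom (β + 1) m hm hinhom
  by_contra! hcon
  refine top_contradiction hf hβ hF hne ?_
  rintro _ ⟨v, hv, rfl⟩ hp
  -- Periodicity of `v` exhibits its zeroth coordinate as the first coordinate of a top point.
  obtain ⟨k, hk, h⟩ := bwdPeriodic_of_top hF hv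
  have hw := cbDeriv_invShift (k - 1) hv
  refine hcon _ (cbDeriv_subset isClosed_inhom _ hw) hw ?_
  have h1 : (invShift (k - 1) v).1 1 = v.1 0 := by
    rw [← h 0, show 0 + k = 1 + (k - 1) by omega]
    rfl
  rw [h1, ← one_add_one_eq_two, cbDeriv_add_one, ← zero_add (1 : Ordinal), cbDeriv_add_one,
    cbDeriv_zero]
  exact hp

end
end

section
/- Let n be a positive integer and let f : [0,1] → [0,1] be a unimodal, locally eventually onto map with critical point c such that ω(c) ≃ ω·n + 1. Then every limit point of ω(c) (i.e. every point of the derived set of ω(c) in [0,1]) is a periodic point of f: for each such x there is k ≥ 1 with f^k(x) = x. -/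
/-!
Write `W = ω(c)` and let `W'` be its derived set. Three facts carry the argument.

* `W'` is finite: in the ordinal space `{ξ ≤ ω·n}` a non-isolated point is a limit ordinal, hence
  one of the finitely many multiples `ω·k` with `k ≤ n` (`finite_dSet`).
* `W ⊆ f(W)`, by compactness of `[0,1]` (`omegaLimitSet_subset_image`).
* Consequently `W' ⊆ f(W')` (`dSet_subset_image`): for `y ∈ W'` the set `W \ {y}` is covered by
  the image of `T = W \ f⁻¹(y)`, so `y = f x` for some `x ∈ closure T`. As `x ∉ T`, the point `x`
  is an accumulation point of `T`, hence of `W`.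

A finite set contained in its image is permuted by the map, so each of its points is periodic
(`periodic_of_finite_subset_image`).
-/

open Set Filter

noncomputable section

/-- Comparing cardinalities, `A ⊆ f(A)` forces `f` to restrict to a permutation of the finite
set `A`. -/
lemma periodic_of_finite_subset_image {X : Type*} {f : X → X} {A : Set X} (hA : A.Finite)
    (h : A ⊆ f '' A) : ∀ x ∈ A, ∃ k : ℕ, 1 ≤ k ∧ f^[k] x = x := by
  have heq : A = f '' A :=
    Set.eq_of_subset_of_ncard_le h (Set.ncard_image_le hA) (hA.image f)
  have hmaps : MapsTo f A A := fun x hx => heq ▸ mem_image_of_mem f hx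
  have hfin : Finite A := hA
  have hsurj : Function.Surjective (hmaps.restrict f A A) := by
    rintro ⟨y, hy⟩
    obtain ⟨x, hx, rfl⟩ := h hy
    exact ⟨⟨x, hx⟩, rfl⟩
  intro x hx
  obtain ⟨k, hk, hper⟩ :=
    (Finite.injective_iff_surjective.mpr hsurj).mem_periodicPts ⟨x, hx⟩
  refine ⟨k, hk, ?_⟩
  have h1 := congrArg Subtype.val hper.eq
  rwa [hmaps.iterate_restrict] at h1

lemma omegaLimitSet_subset_image {f : unitI → unitI} (hf : Continuous f) (c : unitI) :
    omegaLimitSet f c ⊆ f '' omegaLimitSet f c := by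
  intro y hy
  let O : ℕ → Set unitI := fun n => {y : unitI | ∃ m : ℕ, n ≤ m ∧ f^[m] c = y}
  have hclosed : ∀ m, IsClosed (closure (O m) ∩ f ⁻¹' {y}) := fun m =>
    isClosed_closure.inter (isClosed_singleton.preimage hf)
  -- Nested nonempty compact sets of preimages of `y`; a common point lies in `ω(c)`.
  have key : (⋂ m, closure (O m) ∩ f ⁻¹' {y}).Nonempty := by
    refine IsCompact.nonempty_iInter_of_sequence_nonempty_isCompact_isClosed _ ?_ ?_
      (hclosed 0).isCompact hclosed
    · intro m
      refine inter_subset_inter_left _ (closure_mono ?_)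
      rintro z ⟨k, hk, rfl⟩
      exact ⟨k, by omega, rfl⟩
    · intro m
      have hsub : closure (O (m + 1)) ⊆ f '' closure (O m) := by
        refine closure_minimal ?_ (isClosed_closure.isCompact.image hf).isClosed
        rintro z ⟨k, hk, rfl⟩
        refine ⟨f^[k - 1] c, subset_closure ⟨k - 1, by omega, rfl⟩, ?_⟩
        rw [← Function.iterate_succ_apply' f, Nat.succ_eq_add_one, Nat.sub_add_cancel (by omega)]
      obtain ⟨x, hx, hxy⟩ := hsub (mem_iInter.mp hy (m + 1))
      exact ⟨x, hx, hxy⟩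
  obtain ⟨x, hx⟩ := key
  rw [mem_iInter] at hx
  exact ⟨x, mem_iInter.mpr fun m => (hx m).1, (hx 0).2⟩

lemma dSet_subset_image {f : unitI → unitI} (hf : Continuous f) {W : Set unitI}
    (hW : W ⊆ f '' W) : dSet W ⊆ f '' dSet W := by
  intro y hy
  have hycl : y ∈ closure (W \ {y}) := accPt_principal_iff_clusterPt.mp hy |>.mem_closure
  have hsub : closure (W \ {y}) ⊆ f '' closure (W \ f ⁻¹' {y}) := by
    refine closure_minimal ?_ (isClosed_closure.isCompact.image hf).isClosed
    rintro z ⟨hz, hzy⟩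
    obtain ⟨x, hx, rfl⟩ := hW hz
    exact ⟨x, subset_closure ⟨hx, hzy⟩, rfl⟩
  obtain ⟨x, hx, hxy⟩ := hsub hycl
  refine ⟨x, ?_, hxy⟩
  refine accPt_principal_iff_clusterPt.mpr (mem_closure_iff_clusterPt.mp ?_)
  refine closure_mono ?_ hx
  rintro z ⟨hz, hzy⟩
  refine ⟨hz, ?_⟩
  rintro rfl
  exact hzy hxy

lemma continuous_ordSpace_val (o : Ordinal) :
    Continuous (fun a : OrdSpace o => (a.1 : Ordinal)) := by
  have hmono : StrictMono (fun a : OrdSpace o => (a.1 : Ordinal)) := fun _ _ h => h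
  refine (hmono.isEmbedding_of_ordConnected ?_).continuous
  have hr : range (fun a : OrdSpace o => (a.1 : Ordinal)) = Iic o := Subtype.range_coe
  rw [hr]
  exact ordConnected_Iic

lemma finite_not_isolated_ordSpace (n : ℕ) :
    {a : OrdSpace (Ordinal.omega0 * n) | ¬ IsOpen ({a} : Set (OrdSpace _))}.Finite := by
  have hfin : ((fun k : ℕ => Ordinal.omega0 * (k : Ordinal)) '' Iic n).Finite :=
    (finite_Iic n).image _
  refine (hfin.preimage (f := fun a : OrdSpace (Ordinal.omega0 * n) => (a.1 : Ordinal))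
    (Subtype.val_injective.injOn)).subset ?_
  intro a ha
  have hlim : Order.IsSuccLimit (a.1 : Ordinal) := by
    by_contra hcon
    apply ha
    have h1 := (SuccOrder.isOpen_singleton_iff.mpr hcon).preimage
      (continuous_ordSpace_val (Ordinal.omega0 * n))
    convert h1
    ext b
    exact Subtype.ext_iff
  obtain ⟨k, hk⟩ := Ordinal.isSuccPrelimit_iff_omega0_dvd.mp hlim.isSuccPrelimit
  have hle : Ordinal.omega0 * k ≤ Ordinal.omega0 * n := hk ▸ a.2
  have hkn : k ≤ n := (mul_le_mul_iff_right₀ Ordinal.omega0_pos).mp hle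
  obtain ⟨m, rfl⟩ := Ordinal.lt_omega0.mp (hkn.trans_lt (Ordinal.natCast_lt_omega0 n))
  exact ⟨m, by exact_mod_cast hkn, hk.symm⟩

lemma finite_dSet {W : Set unitI} (hW : IsClosed W) {n : ℕ}
    (h : HomeoOrd W (Ordinal.omega0 * n)) : (dSet W).Finite := by
  obtain ⟨e⟩ := h
  have hfin := ((finite_not_isolated_ordSpace n).preimage e.injective.injOn).image (Subtype.val)
  refine hfin.subset ?_
  intro x hx
  have hxcl : x ∈ closure (W \ {x}) := accPt_principal_iff_clusterPt.mp hx |>.mem_closure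
  have hxW : x ∈ W := hW.closure_subset_iff.mpr sdiff_subset hxcl
  refine ⟨⟨x, hxW⟩, ?_, rfl⟩
  intro hopen
  have hopen' := hopen.preimage e.continuous
  obtain ⟨U, hU, hUW⟩ := isOpen_induced_iff.mp hopen'
  have hmem : ∀ z : W, z.1 ∈ U ↔ z = ⟨x, hxW⟩ := fun z => by
    have := Set.ext_iff.mp hUW z
    simpa using this
  obtain ⟨z, hzU, hzW, hzx⟩ := mem_closure_iff.mp hxcl U hU ((hmem ⟨x, hxW⟩).mpr rfl)
  exact hzx (congrArg Subtype.val ((hmem ⟨z, hzW⟩).mp hzU))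

theorem stmt12 (n : ℕ) (hn : 0 < n) (f : unitI → unitI) (c : unitI)
    (hf : Unimodal f c) (hleo : LEO f)
    (homega : HomeoOrd (omegaLimitSet f c) (Ordinal.omega0 * n)) :
    ∀ x ∈ dSet (omegaLimitSet f c), ∃ k : ℕ, 1 ≤ k ∧ f^[k] x = x := by
  have hclosed : IsClosed (omegaLimitSet f c) := isClosed_iInter fun _ => isClosed_closure
  exact periodic_of_finite_subset_image (finite_dSet hclosed homega)
    (dSet_subset_image hf.1 (omegaLimitSet_subset_image hf.1 c))


end
end

section
/- Let h : [0,1] → [0,1] be a unimodal, locally eventually onto map with critical point c such that ω(c) is a Cantor set. Then the set of inhomogeneities 𝓘 = {x ∈ lim←h : x_n ∈ ω(c) for all n} is also a Cantor set. -/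
/-!
Write `ω` for the omega-limit set of `c`, a closed set. By compactness `h` maps `ω` onto
itself (`omegaLimitSet_subset_image`), so every `y ∈ ω` occurs as the `n`-th coordinate of some
point of `Inhom h c`, for each `n` (`exists_inhom_coord`).  A neighbourhood of a point `x` of
the inverse limit contains all points whose `n`-th coordinate is close to `x n`, for one large
`n` (`exists_coord_nhds`), because the earlier coordinates are continuous images of the `n`-th.
As `x n` is not isolated in `ω`, some `y ∈ ω` near `x n` differs from it, and a point of
`Inhom h c` with `n`-th coordinate `y` shows that `x` is not isolated.  Compactness and total
disconnectedness pass from `ω` to `Inhom h c` coordinatewise.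
-/

open Set Filter

noncomputable section

/-- A Cantor set: a nonempty, compact, perfect, totally disconnected subset
(of a metrizable ambient space). -/
def IsCantorSet {X : Type*} [TopologicalSpace X] (A : Set X) : Prop :=
  A.Nonempty ∧ IsCompact A ∧ Perfect A ∧ IsTotallyDisconnected A

theorem omegaLimitSet_isClosed (h : unitI → unitI) (c : unitI) :
    IsClosed (omegaLimitSet h c) :=
  isClosed_iInter fun _ => isClosed_closure

theorem omegaLimitSet_mapsTo_s13 {h : unitI → unitI} (hc : Continuous h) (c : unitI) :
    MapsTo h (omegaLimitSet h c) (omegaLimitSet h c) := by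
  intro x hx
  refine mem_iInter.2 fun n => ?_
  refine map_mem_closure hc (mem_iInter.1 hx n) ?_
  rintro _ ⟨m, hm, rfl⟩
  exact ⟨m + 1, by omega, Function.iterate_succ_apply' h m c⟩

/-- The omega-limit set is contained in its own image: the fibre over a point of it meets every
closed tail of the orbit of `c`, hence meets their intersection by compactness. -/
theorem omegaLimitSet_subset_image_s13 {h : unitI → unitI} (hc : Continuous h) (c : unitI) :
    ∀ y ∈ omegaLimitSet h c, ∃ x ∈ omegaLimitSet h c, h x = y := by
  intro y hy
  set K : ℕ → Set unitI := fun n => closure {y : unitI | ∃ m : ℕ, n ≤ m ∧ h^[m] c = y} with hK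
  have hKc : ∀ n, IsClosed (K n ∩ h ⁻¹' {y}) := fun n =>
    isClosed_closure.inter (isClosed_singleton.preimage hc)
  have hne : (⋂ n, K n ∩ h ⁻¹' {y}).Nonempty := by
    refine IsCompact.nonempty_iInter_of_sequence_nonempty_isCompact_isClosed _ ?_ ?_
      (hKc 0).isCompact hKc
    · intro n
      refine inter_subset_inter_left _ (closure_mono ?_)
      rintro _ ⟨m, hm, rfl⟩
      exact ⟨m, by omega, rfl⟩
    · intro n
      have hsub : K (n + 1) ⊆ h '' K n := by
        refine closure_minimal ?_ ((isClosed_closure.isCompact).image hc).isClosed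
        rintro _ ⟨m, hm, rfl⟩
        obtain ⟨k, rfl⟩ : ∃ k, m = k + 1 := ⟨m - 1, by omega⟩
        exact ⟨h^[k] c, subset_closure ⟨k, by omega, rfl⟩,
          (Function.iterate_succ_apply' h k c).symm⟩
      obtain ⟨x, hx, hxy⟩ := hsub (mem_iInter.1 hy (n + 1))
      exact ⟨x, hx, hxy⟩
  obtain ⟨x, hx⟩ := hne
  rw [mem_iInter] at hx
  exact ⟨x, mem_iInter.2 fun n => (hx n).1, (hx 0).2⟩

theorem exists_inhom_coord {h : unitI → unitI} (hc : Continuous h) (c : unitI) (n : ℕ)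
    {y : unitI} (hy : y ∈ omegaLimitSet h c) :
    ∃ z : InvLim h, z ∈ Inhom h c ∧ (z : ℕ → unitI) n = y := by
  choose! g hgm hg using omegaLimitSet_subset_image_s13 hc c
  have hgi : ∀ k, g^[k] y ∈ omegaLimitSet h c := fun k =>
    MapsTo.iterate (s := omegaLimitSet h c) hgm k hy
  -- Truncated subtraction makes one of the two iterates trivial: apply `h` below index `n`
  -- and the section `g` above it.
  refine ⟨⟨fun k => h^[n - k] (g^[k - n] y), fun k => ?_⟩, fun k => ?_, ?_⟩
  · change h (h^[n - (k + 1)] (g^[k + 1 - n] y)) = h^[n - k] (g^[k - n] y)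
    rcases Nat.lt_or_ge k n with hk | hk
    · have e : n - k = (n - (k + 1)) + 1 := by omega
      rw [show k + 1 - n = 0 by omega, show k - n = 0 by omega, e,
        Function.iterate_succ_apply']
    · rw [show n - (k + 1) = 0 by omega, show n - k = 0 by omega,
        show k + 1 - n = (k - n) + 1 by omega, Function.iterate_succ_apply']
      exact hg _ (hgi _)
  · exact (omegaLimitSet_mapsTo_s13 hc c).iterate _ (hgi _)
  · simp

theorem invLim_iterate {h : unitI → unitI} (x : InvLim h) (i k : ℕ) :
    h^[k] ((x : ℕ → unitI) (i + k)) = (x : ℕ → unitI) i := by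
  induction k with
  | zero => rfl
  | succ k ih =>
    rw [Function.iterate_succ_apply, ← add_assoc, x.2 (i + k), ih]

/-- Preimages of open sets under a single coordinate projection form a neighbourhood basis. -/
theorem exists_coord_nhds {h : unitI → unitI} (hc : Continuous h) (x : InvLim h)
    {U : Set (InvLim h)} (hU : U ∈ nhds x) :
    ∃ n : ℕ, ∃ V ∈ nhds ((x : ℕ → unitI) n),
      ∀ y : InvLim h, (y : ℕ → unitI) n ∈ V → y ∈ U := by
  rw [nhds_subtype_eq_comap, mem_comap] at hU
  obtain ⟨S, hS, hSU⟩ := hU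
  rw [nhds_pi, Filter.mem_pi] at hS
  obtain ⟨I, hI, t, ht, htS⟩ := hS
  obtain ⟨n, hn⟩ := hI.bddAbove
  have key : ∀ y : InvLim h, ∀ i ∈ I,
      h^[n - i] ((y : ℕ → unitI) n) = (y : ℕ → unitI) i := by
    intro y i hi
    have := invLim_iterate y i (n - i)
    rwa [Nat.add_sub_cancel' (hn hi)] at this
  refine ⟨n, ⋂ i ∈ I, h^[n - i] ⁻¹' t i, ?_, fun y hy => hSU (htS fun i hi => ?_)⟩
  · refine (biInter_mem hI).2 fun i hi => ?_
    refine (hc.iterate (n - i)).continuousAt.preimage_mem_nhds ?_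
    rw [key x i hi]
    exact ht i
  · rw [← key y i hi]
    exact mem_iInter₂.1 hy i hi

theorem stmt13 (h : unitI → unitI) (c : unitI) (hh : Unimodal h c) (hleo : LEO h)
    (hcantor : IsCantorSet (omegaLimitSet h c)) :
    IsCantorSet (Inhom h c) := by
  obtain ⟨hc, -⟩ := hh
  obtain ⟨⟨p, hp⟩, -, hperf, htd⟩ := hcantor
  have hcoord : ∀ n, Continuous fun x : InvLim h => (x : ℕ → unitI) n := fun n =>
    (continuous_apply n).comp continuous_subtype_val
  have hclosed : IsClosed (Inhom h c) := by
    have : Inhom h c = ⋂ n, (fun x : InvLim h => (x : ℕ → unitI) n) ⁻¹' omegaLimitSet h c := by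
      ext x
      simp [Inhom]
    rw [this]
    exact isClosed_iInter fun n => (omegaLimitSet_isClosed h c).preimage (hcoord n)
  have hlim : IsClosed (InvLim h) := by
    have : InvLim h = ⋂ i, {x : ℕ → unitI | h (x (i + 1)) = x i} := by
      ext x
      simp [InvLim]
    rw [this]
    exact isClosed_iInter fun i =>
      isClosed_eq (hc.comp (continuous_apply (i + 1))) (continuous_apply i)
  have : CompactSpace (InvLim h) := isCompact_iff_compactSpace.1 hlim.isCompact
  refine ⟨?_, hclosed.isCompact, ⟨hclosed, ?_⟩, ?_⟩
  · obtain ⟨z, hz, -⟩ := exists_inhom_coord hc c 0 hp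
    exact ⟨z, hz⟩
  · intro x hx
    rw [accPt_iff_nhds]
    intro U hU
    obtain ⟨n, V, hV, hVU⟩ := exists_coord_nhds hc x hU
    obtain ⟨y, ⟨hyV, hyω⟩, hyx⟩ := accPt_iff_nhds.1 (hperf.acc _ (hx n)) V hV
    obtain ⟨z, hz, hzn⟩ := exists_inhom_coord hc c n hyω
    refine ⟨z, ⟨hVU z (hzn ▸ hyV), hz⟩, ?_⟩
    rintro rfl
    exact hyx hzn.symm
  · intro T hT hTc x hx y hy
    refine Subtype.ext (funext fun n => ?_)
    refine htd _ ?_ (hTc.image _ (hcoord n).continuousOn) (mem_image_of_mem _ hx)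
      (mem_image_of_mem _ hy)
    rintro _ ⟨z, hz, rfl⟩
    exact hT hz n

end
end

section
/- There exists a unimodal, locally eventually onto map f : [0,1] → [0,1] with critical point c such that ω(c) ≃ ω² + 1 (in particular ω(c) is countable), while the set of inhomogeneities 𝓘 is a Cantor set (in particular uncountable). -/
/-!
The map is the core tent map of slope `3/2`, with critical point `1/3` (increasing branch
`1/2 + 3x/2`, decreasing branch `3(1 - x)/2`), modified on `[0, 1/250]` so that `0 ↦ b` with `b`
free in `[0, 1/2]`. The critical orbit is `1/3 → 1 → 0 → b → ⋯`, and it is arranged that the orbit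
of `b` never meets `[0, 1/250)`. Hence the part of the map acting on that orbit does not depend on
`b`, and `b` can simply be chosen as a point with a prescribed itinerary. All branches have slope at
least `3/2 > √2` in absolute value, which gives the locally eventually onto property (`leo_fm`).

Itineraries are sequences `u : ℕ → Bool`, `true` meaning a position left of the critical point. If the
`true`s of `u` are congruent modulo `8`, the series `Pv u` is a point with itinerary `u`
(`Fm_Pv`, `Pv_true`, `Pv_false`). The sequence used for `b` is `cs`: it is `true` at the places
`8n² - 8·2^i`, where `i` runs over the binary digits `1` of `n`. Thus each finite set of exponents is
spelled out, backwards from `8n²`, by some `n`, and consecutive blocks are ever further apart.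
Two `true`s in the same block determine the distance to the end of their block, since `2^j - 2^i`
determines `j` and `i`. Consequently the limits of shifts of `cs` are exactly the sequences whose
support lies in `T - {8·2^i}` for some `T` (the set `XS`; see `Rec.mem` and `rec_of_mem`), and
`ω(c)` is a homeomorphic copy of `XS` (`omega_eq`).

In `XS` a sequence with two `true`s is isolated, the sequence with a single `true` at `a` is the
only other one in the clopen set of sequences with first `true` at `a`, and the zero sequence is the
limit of these clopen sets. This is the structure of `ω² + 1` (`homeoOrd_of_code`, `homeoOrd_XS`).

A point of the inverse limit over `ω(c)` is a compatible backward sequence in `XS`. Given its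
first coordinates, one may or may not insert a further `true` at distance `8·2^K` before `T`, with
`K` large; so no point is isolated (`exists_other`). Countability of `ω(c)` gives total
disconnectedness, and `𝓘` is a Cantor set (`cantor_Inhom`).
-/


open Set Filter

noncomputable section

open Topology

universe v

/-! ### Coding points by itineraries -/

/-- The `m`-th iterate of the one-sided shift. -/
def sh (m : ℕ) (u : ℕ → Bool) : ℕ → Bool := fun n => u (n + m)

/-- All places where `u` is `true` are congruent modulo `8`; in particular they are at least `8`
apart, which is what the estimates on `yv` use. -/
def Good (u : ℕ → Bool) : Prop := ∀ i j, u i = true → u j = true → i % 8 = j % 8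

/-- Translation part of the inverse branch, in the coordinate centred at the fixed point `3/5`. -/
def wt (t : Bool) : ℝ := if t then -(8/15) else 0
/-- Slope of the inverse branch: increasing for `true` (left), decreasing for `false` (right). -/
def rt (t : Bool) : ℝ := if t then 2/3 else -(2/3)
/-- The `k`-th term of the series `yv`. -/
def term (k : ℕ) (u : ℕ → Bool) : ℝ := (∏ i ∈ Finset.range k, rt (u i)) * wt (u k)
/-- The point with itinerary `u`, in the coordinate centred at the fixed point `3/5` of the
decreasing branch: the limit of the inverse branches `y ↦ wt (u k) + rt (u k) * y` composed along
`u`. -/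
def yv (u : ℕ → Bool) : ℝ := ∑' k, term k u

lemma abs_term_le (k : ℕ) (u : ℕ → Bool) : |term k u| ≤ (8/15) * (2/3 : ℝ) ^ k := by
  unfold term
  rw [abs_mul, Finset.abs_prod]
  have h1 : ∀ t, |rt t| = 2/3 := by
    intro t; cases t <;> simp [rt, abs_of_pos]
  have h2 : ∀ t, |wt t| ≤ 8/15 := by
    intro t; cases t <;> simp [wt, abs_of_pos]; norm_num
  simp only [h1, Finset.prod_const, Finset.card_range]
  rw [mul_comm]
  gcongr
  exact h2 _

lemma hasSum_bound : HasSum (fun k : ℕ => (8/15) * (2/3 : ℝ) ^ k) (8/5) := by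
  have := (hasSum_geometric_of_lt_one (r := (2/3 : ℝ)) (by norm_num) (by norm_num)).mul_left (8/15)
  rwa [show (8/15 * (1 - 2/3)⁻¹ : ℝ) = 8/5 by norm_num] at this

lemma summable_term (u : ℕ → Bool) : Summable (fun k => term k u) :=
  Summable.of_norm_bounded hasSum_bound.summable (fun k => abs_term_le k u)

lemma abs_yv_le (u : ℕ → Bool) : |yv u| ≤ 8/5 := by
  rw [← Real.norm_eq_abs]
  exact tsum_of_norm_bounded hasSum_bound (fun k => abs_term_le k u)

lemma continuous_yv : Continuous yv := by
  refine continuous_tsum (fun k => ?_) hasSum_bound.summable (fun k u => abs_term_le k u)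
  unfold term
  refine (continuous_finsetProd _ fun i _ => ?_).mul ?_
  · exact (continuous_of_discreteTopology (f := rt)).comp (continuous_apply i)
  · exact (continuous_of_discreteTopology (f := wt)).comp (continuous_apply k)

lemma yv_eq (u : ℕ → Bool) : yv u = wt (u 0) + rt (u 0) * yv (sh 1 u) := by
  unfold yv
  rw [(summable_term u).tsum_eq_zero_add, ← tsum_mul_left]
  congr 1
  · simp [term]
  · refine tsum_congr fun k => ?_
    simp only [term, Finset.prod_range_succ', sh]
    ring

lemma sh_sh (m n : ℕ) (u : ℕ → Bool) : sh m (sh n u) = sh (m + n) u := by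
  funext k; simp [sh, add_assoc]

lemma yv_false {u : ℕ → Bool} (h : u 0 = false) : yv u = -(2/3) * yv (sh 1 u) := by
  rw [yv_eq, h]; simp [wt, rt]

lemma yv_true {u : ℕ → Bool} (h : u 0 = true) : yv u = -(8/15) + (2/3) * yv (sh 1 u) := by
  rw [yv_eq, h]; simp [wt, rt]

lemma abs_yv_of_zeros (k : ℕ) : ∀ u : ℕ → Bool, (∀ i < k, u i = false) →
    |yv u| = (2/3) ^ k * |yv (sh k u)| := by
  induction k with
  | zero => intro u _; simp; rfl
  | succ k ih =>
    intro u hu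
    rw [yv_false (hu 0 (by omega)), abs_mul, ih (sh 1 u) (fun i hi => hu (i+1) (by omega)), sh_sh,
      pow_succ]
    rw [abs_neg, abs_of_pos (by norm_num : (0:ℝ) < 2/3)]
    ring

lemma Good.sh {u : ℕ → Bool} (h : Good u) (m : ℕ) : Good (sh m u) := by
  intro i j hi hj
  have := h _ _ hi hj
  omega

/-- A point on the left is close to `-8/15`, since the next `7` entries of its itinerary are
`false`. -/
lemma yv_near {u : ℕ → Bool} (h : Good u) (h0 : u 0 = true) : |yv u + 8/15| ≤ 1/16 := by
  have hz : ∀ i < 7, sh 1 u i = false := by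
    intro i hi
    by_contra hc
    have := h _ _ h0 (by simpa [_root_.sh] using hc : u (i+1) = true)
    omega
  have h1 := abs_yv_of_zeros 7 _ hz
  have h2 := abs_yv_le (sh 7 (sh 1 u))
  rw [yv_true h0]
  have : -(8/15) + 2/3 * yv (sh 1 u) + 8/15 = 2/3 * yv (sh 1 u) := by ring
  rw [this, abs_mul, h1, abs_of_pos (by norm_num : (0:ℝ) < 2/3)]
  norm_num at h2 ⊢
  linarith

/-- The crude bound `8/5` of `abs_yv_le` improves to `3/5` on good sequences. -/
lemma abs_yv_le' {u : ℕ → Bool} (h : Good u) : |yv u| ≤ 3/5 := by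
  have key : ∀ v, Good v → v 0 = true → |yv v| ≤ 3/5 := by
    intro v hv h0
    have := abs_le.1 (yv_near hv h0)
    rw [abs_le]; constructor <;> linarith
  have mono : ∀ v, v 0 = false → |yv (sh 1 v)| ≤ 3/5 → |yv v| ≤ 3/5 := by
    intro v h0 h1
    have := abs_yv_of_zeros 1 v (by intro i hi; interval_cases i; exact h0)
    rw [this]; norm_num; linarith
  cases h0 : u 0
  · cases h1 : u 1
    · cases h2 : u 2
      · rw [abs_yv_of_zeros 3 u (by intro i hi; interval_cases i <;> assumption)]
        have := abs_yv_le (sh 3 u)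
        norm_num
        linarith
      · exact mono _ h0 (mono _ h1 (by rw [sh_sh]; exact key _ (h.sh 2) h2))
    · exact mono _ h0 (key _ (h.sh 1) h1)
  · exact key _ h h0

/-- The point of `[0,1]` with itinerary `u`, for good `u`. -/
def Pv (u : ℕ → Bool) : ℝ := 3/5 + yv u

lemma Pv_true {u : ℕ → Bool} (h : Good u) (h0 : u 0 = true) : 1/250 ≤ Pv u ∧ Pv u ≤ 1/4 := by
  have := abs_le.1 (yv_near h h0)
  unfold Pv; constructor <;> linarith

lemma Pv_false {u : ℕ → Bool} (h : Good u) (h0 : u 0 = false) : 1/3 < Pv u ∧ Pv u ≤ 1 := by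
  unfold Pv
  rw [yv_false h0]
  have b1 := abs_le.1 (abs_yv_le' (h.sh 1))
  refine ⟨?_, by linarith⟩
  cases h1 : u 1
  · have h1' : sh 1 u 0 = false := h1
    rw [yv_false h1', sh_sh]
    cases h2 : u 2
    · have h2' : sh (1+1) u 0 = false := h2
      rw [yv_false h2', sh_sh]
      have b3 := abs_le.1 (abs_yv_le' (h.sh 3))
      norm_num at b3 ⊢
      linarith
    · have := abs_le.1 (yv_near (h.sh 2) h2)
      norm_num at this ⊢
      linarith
  · have := abs_le.1 (yv_near (h.sh 1) h1)
    linarith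

/-- The unimodal map with `0 ↦ b`. For `b ≤ 1/2` the first of the three affine functions is the
smallest on `[0, 1/250]`, the second on `[1/250, 1/3]`, the third on `[1/3, 1]`. -/
def Fm (b x : ℝ) : ℝ :=
  min (min (b + (3/2 + 250 * (1/2 - b)) * x) (1/2 + 3/2 * x)) (3/2 * (1 - x))

lemma Fm_right {b x : ℝ} (h0 : b ≤ 1/2) (hx : 1/3 ≤ x) : Fm b x = 3/2 * (1 - x) := by
  unfold Fm
  apply min_eq_right
  apply le_min
  · nlinarith
  · linarith

lemma Fm_left {b x : ℝ} (hx : x ≤ 1/3) :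
    Fm b x = min (b + (3/2 + 250 * (1/2 - b)) * x) (1/2 + 3/2 * x) := by
  unfold Fm
  apply min_eq_left
  apply (min_le_right _ _).trans
  linarith

lemma Fm_mid {b x : ℝ} (h0 : b ≤ 1/2) (hd : 1/250 ≤ x) (hx : x ≤ 1/3) :
    Fm b x = 1/2 + 3/2 * x := by
  rw [Fm_left hx]
  apply min_eq_right
  nlinarith

/-- Semiconjugacy with the shift, whatever the value of `b`: good points avoid `[0, 1/250)`. -/
lemma Fm_Pv {b : ℝ} (h0 : b ≤ 1/2) {u : ℕ → Bool} (h : Good u) :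
    Fm b (Pv u) = Pv (sh 1 u) := by
  cases hu : u 0
  · rw [Fm_right h0 (Pv_false h hu).1.le]
    simp only [Pv, yv_false hu]; ring
  · have := Pv_true h hu
    rw [Fm_mid h0 this.1 (by linarith)]
    simp only [Pv, yv_true hu]; ring

lemma Pv_mem {u : ℕ → Bool} (h : Good u) : Pv u ∈ Icc (0:ℝ) 1 := by
  cases hu : u 0
  · have := Pv_false h hu
    constructor <;> linarith
  · have := Pv_true h hu
    constructor <;> linarith

lemma continuous_Fm (b : ℝ) : Continuous (Fm b) := by unfold Fm; fun_prop

lemma Fm_mem {b x : ℝ} (hb : 0 ≤ b) (h0 : b ≤ 1/2) (hx : x ∈ Icc (0:ℝ) 1) : Fm b x ∈ Icc (0:ℝ) 1 := by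
  obtain ⟨hx0, hx1⟩ := hx
  constructor
  · unfold Fm
    refine le_min (le_min ?_ ?_) ?_
    · have : 0 ≤ (3/2 + 250 * (1/2 - b)) * x := mul_nonneg (by linarith) hx0
      linarith
    · linarith
    · linarith
  · rcases le_total x (1/3) with h | h
    · rw [Fm_left h]
      apply (min_le_right _ _).trans; linarith
    · rw [Fm_right h0 h]; linarith

lemma Fm_expand_left {b x y : ℝ} (h0 : b ≤ 1/2) (hxy : x ≤ y) (hy : y ≤ 1/3) :
    3/2 * (y - x) ≤ Fm b y - Fm b x := by
  rw [Fm_left hy, Fm_left (hxy.trans hy), le_sub_iff_add_le]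
  apply le_min
  · have := min_le_left (b + (3/2 + 250 * (1/2 - b)) * x) (1/2 + 3/2 * x)
    nlinarith
  · have := min_le_right (b + (3/2 + 250 * (1/2 - b)) * x) (1/2 + 3/2 * x)
    linarith

lemma Fm_crit {b : ℝ} (h0 : b ≤ 1/2) : Fm b (1/3) = 1 := by
  rw [Fm_right h0 le_rfl]; norm_num

lemma Fm_step {b p q : ℝ} (h0 : b ≤ 1/2) (hpq : p ≤ q) (h : q ≤ 1/3 ∨ 1/3 ≤ p) :
    ∃ p' q', 3/2 * (q - p) ≤ q' - p' ∧ Icc p' q' ⊆ Fm b '' Icc p q := by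
  rcases h with h | h
  · exact ⟨Fm b p, Fm b q, Fm_expand_left h0 hpq h,
      intermediate_value_Icc hpq (continuous_Fm b).continuousOn⟩
  · refine ⟨Fm b q, Fm b p, ?_, intermediate_value_Icc' hpq (continuous_Fm b).continuousOn⟩
    rw [Fm_right h0 h, Fm_right h0 (h.trans hpq)]; linarith

/-- The image of an interval around the critical point ends at `1`, and contains the image of the
longer of the two sides. -/
lemma Fm_fold {b p q : ℝ} (h0 : b ≤ 1/2) (hp : p ≤ 1/3) (hq : 1/3 ≤ q) :
    ∃ p', 3/4 * (q - p) ≤ 1 - p' ∧ Icc p' 1 ⊆ Fm b '' Icc p q := by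
  rcases le_total (1/3 - p) (q - 1/3) with h | h
  · refine ⟨Fm b q, ?_, ?_⟩
    · rw [Fm_right h0 hq]; linarith
    · have := intermediate_value_Icc' hq (continuous_Fm b).continuousOn
      rw [Fm_crit h0] at this
      exact this.trans (image_mono (Icc_subset_Icc_left hp))
  · refine ⟨Fm b p, ?_, ?_⟩
    · have := Fm_expand_left h0 hp le_rfl
      rw [Fm_crit h0] at this; linarith
    · have := intermediate_value_Icc hp (continuous_Fm b).continuousOn
      rw [Fm_crit h0] at this
      exact this.trans (image_mono (Icc_subset_Icc_right hq))

/-- Two steps either cover `[0,1]` or enlarge an interval by the factor `9/8 = (3/2)² / 2`: if the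
critical point lies in both the interval and its image, then the image contains `[1/3, 1]`. -/
lemma Fm_two {b p q : ℝ} (h0 : b ≤ 1/2) (hpq : p < q) :
    (Icc 0 1 ⊆ (Fm b)^[2] '' Icc p q) ∨
    ∃ p' q', 9/8 * (q - p) ≤ q' - p' ∧ Icc p' q' ⊆ (Fm b)^[2] '' Icc p q := by
  have e : (Fm b)^[2] '' Icc p q = Fm b '' (Fm b '' Icc p q) := by
    rw [image_image]; rfl
  rw [e]
  by_cases hc : q ≤ 1/3 ∨ 1/3 ≤ p
  · obtain ⟨p', q', hl, hs⟩ := Fm_step h0 hpq.le hc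
    right
    by_cases hc' : q' ≤ 1/3 ∨ 1/3 ≤ p'
    · obtain ⟨p'', q'', hl', hs'⟩ := Fm_step h0 (by linarith) hc'
      exact ⟨p'', q'', by linarith, hs'.trans (image_mono hs)⟩
    · push Not at hc'
      obtain ⟨p'', hl', hs'⟩ := Fm_fold h0 hc'.2.le hc'.1.le
      exact ⟨p'', 1, by linarith, hs'.trans (image_mono hs)⟩
  · push Not at hc
    obtain ⟨p', hl, hs⟩ := Fm_fold h0 hc.2.le hc.1.le
    rcases le_total (1/3) p' with h | h
    · obtain ⟨p'', q'', hl', hs'⟩ := Fm_step (q := 1) h0 (by linarith) (Or.inr h)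
      exact Or.inr ⟨p'', q'', by linarith, hs'.trans (image_mono hs)⟩
    · left
      refine Subset.trans ?_ (image_mono (Subset.trans (Icc_subset_Icc_left h) hs))
      have := intermediate_value_Icc' (by norm_num : (1/3:ℝ) ≤ 1) (continuous_Fm b).continuousOn
      rw [Fm_crit h0, Fm_right h0 (by norm_num)] at this
      simpa using this

lemma Fm_iter_mem {b x : ℝ} (hb : 0 ≤ b) (h0 : b ≤ 1/2) (hx : x ∈ Icc (0:ℝ) 1) (n : ℕ) :
    (Fm b)^[n] x ∈ Icc (0:ℝ) 1 := by
  induction n with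
  | zero => exact hx
  | succ n ih => rw [Function.iterate_succ_apply']; exact Fm_mem hb h0 ih

lemma Fm_leo {b p q : ℝ} (hb : 0 ≤ b) (h0 : b ≤ 1/2) (hpq : p < q) (hp : 0 ≤ p) (hq : q ≤ 1) :
    ∃ N, Icc 0 1 ⊆ (Fm b)^[N] '' Icc p q := by
  by_contra hcon
  push Not at hcon
  have key : ∀ n : ℕ, ∃ p' q', (9/8)^n * (q - p) ≤ q' - p' ∧
      Icc p' q' ⊆ (Fm b)^[2 * n] '' Icc p q := by
    intro n
    induction n with
    | zero => exact ⟨p, q, by simp, by simp⟩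
    | succ n ih =>
      obtain ⟨p', q', hl, hs⟩ := ih
      have e : (Fm b)^[2 * (n+1)] '' Icc p q = (Fm b)^[2] '' ((Fm b)^[2 * n] '' Icc p q) := by
        rw [← image_comp, ← Function.iterate_add]; congr 2; ring
      have hpos : 0 < (9/8 : ℝ)^n * (q - p) := mul_pos (by positivity) (by linarith)
      rcases Fm_two h0 (show p' < q' by linarith) with h | ⟨p'', q'', hl', hs'⟩
      · exact absurd (h.trans (image_mono hs)) (by rw [← e]; exact hcon _)
      · refine ⟨p'', q'', ?_, ?_⟩
        · rw [pow_succ]; linarith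
        · rw [e]; exact hs'.trans (image_mono hs)
  obtain ⟨n, hn⟩ := pow_unbounded_of_one_lt (1 / (q - p)) (by norm_num : (1:ℝ) < 9/8)
  obtain ⟨p', q', hl, hs⟩ := key n
  rw [div_lt_iff₀ (by linarith)] at hn
  have hle : p' ≤ q' := by linarith
  have mem : ∀ z ∈ Icc p' q', z ∈ Icc (0:ℝ) 1 := by
    intro z hz
    obtain ⟨w, hw, rfl⟩ := hs hz
    exact Fm_iter_mem hb h0 ⟨hp.trans hw.1, hw.2.trans hq⟩ _
  have h1 := (mem p' ⟨le_rfl, hle⟩).1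
  have h2 := (mem q' ⟨hle, le_rfl⟩).2
  linarith

/-! ### The itinerary of the third iterate of the critical point, and its limits -/

/-- The support of `x` is contained in `T - {8 * 2 ^ i : i ∈ ℕ}`. -/
def Adm (T : ℕ) (x : ℕ → Bool) : Prop := ∀ r, x r = true → ∃ i, r + 8 * 2 ^ i = T

/-- The set of limit itineraries. -/
def XS : Set (ℕ → Bool) := {x | ∃ T, Adm T x}

open Classical in
/-- The itinerary of the third iterate of the critical point: block `n` spells out the binary
digits of `n`, backwards from the place `8 * n ^ 2`. -/
def cs : ℕ → Bool := fun m => decide (∃ n i : ℕ, n.testBit i = true ∧ m + 8 * 2 ^ i = 8 * n ^ 2)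

lemma cs_iff (m : ℕ) :
    cs m = true ↔ ∃ n i : ℕ, n.testBit i = true ∧ m + 8 * 2 ^ i = 8 * n ^ 2 := by
  simp [cs]

lemma good_cs : Good cs := by
  intro i j hi hj
  obtain ⟨n, k, -, h⟩ := (cs_iff _).1 hi
  obtain ⟨n', k', -, h'⟩ := (cs_iff _).1 hj
  omega

lemma cs_zero : cs 0 = true := (cs_iff 0).2 ⟨1, 0, by simp, by norm_num⟩

lemma Adm.good {T : ℕ} {x : ℕ → Bool} (h : Adm T x) : Good x := by
  intro i j hi hj
  obtain ⟨k, h1⟩ := h _ hi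
  obtain ⟨k', h2⟩ := h _ hj
  omega

lemma XS_good {x : ℕ → Bool} (h : x ∈ XS) : Good x := h.elim fun _ h => h.good

/-- Distinct blocks of `cs` are far apart. -/
lemma block_sep {n n' k k' A A' : ℕ} (hn : n < n') (hk : 1 ≤ k) (hk' : k' ≤ n')
    (h : A + 8 * k = 8 * n ^ 2) (h' : A' + 8 * k' = 8 * n' ^ 2) : A + 8 * n + 8 ≤ A' := by
  nlinarith

lemma block_eq {n n' k k' A A' L : ℕ} (hk1 : 1 ≤ k) (hk : k ≤ n) (hk1' : 1 ≤ k') (hk' : k' ≤ n')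
    (hA : A < A' + L) (hA' : A' < A + L) (hn : L ≤ n) (hn' : L ≤ n')
    (h : A + 8 * k = 8 * n ^ 2) (h' : A' + 8 * k' = 8 * n' ^ 2) : n = n' := by
  rcases lt_trichotomy n n' with hlt | heq | hlt
  · have := block_sep hlt hk1 hk' h h'; omega
  · exact heq
  · have := block_sep hlt hk1' hk h' h; omega

/-- A difference `2 ^ j - 2 ^ i > 0` determines `j`. -/
lemma pow_diff_unique {i j i' j' a a' T T' : ℕ} (haa : a < a')
    (h1 : a + 8 * 2 ^ j = T) (h2 : a' + 8 * 2 ^ i = T)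
    (h1' : a + 8 * 2 ^ j' = T') (h2' : a' + 8 * 2 ^ i' = T') : T = T' := by
  have key : ∀ i j i' j' : ℕ, 2 ^ i < 2 ^ j → 2 ^ i' < 2 ^ j' → 2 ^ j + 2 ^ i' = 2 ^ j' + 2 ^ i →
      ¬ j < j' := by
    intro i j i' j' h1 h2 h hlt
    have e1 : 2 * 2 ^ j ≤ 2 ^ j' := by
      rw [← pow_succ']; exact Nat.pow_le_pow_right (by norm_num) hlt
    have e2 : 2 * 2 ^ i' ≤ 2 ^ j' := by
      rw [← pow_succ']
      exact Nat.pow_le_pow_right (by norm_num) ((Nat.pow_lt_pow_iff_right (by norm_num)).1 h2)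
    have : 0 < 2 ^ i := by positivity
    omega
  have hj : j = j' := by
    apply le_antisymm
    · exact not_lt.1 (key i' j' i j (by omega) (by omega) (by omega))
    · exact not_lt.1 (key i j i' j' (by omega) (by omega) (by omega))
  subst hj; omega

lemma Adm.unique {T T' a a' : ℕ} {x y : ℕ → Bool} (h : Adm T x) (h' : Adm T' y) (haa : a < a')
    (hx : x a = true) (hx' : x a' = true) (hy : y a = true) (hy' : y a' = true) : T = T' := by
  obtain ⟨j, hj⟩ := h _ hx
  obtain ⟨i, hi⟩ := h _ hx'
  obtain ⟨j', hj'⟩ := h' _ hy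
  obtain ⟨i', hi'⟩ := h' _ hy'
  exact pow_diff_unique haa hj hi hj' hi'

lemma finite_Adm (T : ℕ) : {x | Adm T x}.Finite := by
  have : {x : ℕ → Bool | Adm T x} ⊆
      (fun (s : Set ℕ) => (fun n => (open Classical in decide (n ∈ s)))) '' (𝒫 (Set.Iio T)) := by
    intro x hx
    refine ⟨{r | x r = true}, ?_, ?_⟩
    · intro r hr
      obtain ⟨i, hi⟩ := hx r hr
      have : 0 < 2 ^ i := by positivity
      simp only [Set.mem_Iio]; omega
    · funext n; simp
  exact ((Set.finite_Iio T).finite_subsets.image _).subset this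

lemma countable_XS : XS.Countable := by
  have : XS = ⋃ T, {x | Adm T x} := by ext; simp [XS]
  rw [this]
  exact countable_iUnion fun T => (finite_Adm T).countable

/-- Every initial segment of `x` occurs in `cs` arbitrarily far out, that is, `x` is a limit of
shifts of `cs`. -/
def Rec (x : ℕ → Bool) : Prop := ∀ L M : ℕ, ∃ m ≥ M, ∀ r < L, cs (r + m) = x r

lemma Rec.mem {x : ℕ → Bool} (h : Rec x) : x ∈ XS := by
  have loc : ∀ L : ℕ, ∃ T, ∀ r < L, x r = true → ∃ i, r + 8 * 2 ^ i = T := by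
    intro L
    obtain ⟨m, hm, hx⟩ := h L (8 * L ^ 2)
    by_cases hex : ∃ r0 < L, x r0 = true
    · obtain ⟨r0, hr0, hx0⟩ := hex
      rw [← hx r0 hr0] at hx0
      obtain ⟨n, i, hb, he⟩ := (cs_iff _).1 hx0
      have hin := Nat.ge_two_pow_of_testBit hb
      have hi1 : 1 ≤ 2 ^ i := Nat.one_le_two_pow
      refine ⟨8 * n ^ 2 - m, fun r hr hxr => ?_⟩
      rw [← hx r hr] at hxr
      obtain ⟨n', i', hb', he'⟩ := (cs_iff _).1 hxr
      have hin' := Nat.ge_two_pow_of_testBit hb'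
      have hi1' : 1 ≤ 2 ^ i' := Nat.one_le_two_pow
      have hL : L ≤ n := by nlinarith
      have hL' : L ≤ n' := by nlinarith
      have := block_eq (L := L) hi1 hin hi1' hin' (by omega) (by omega) hL hL' he he'
      subst this
      exact ⟨i', by omega⟩
    · push Not at hex
      exact ⟨0, fun r hr hxr => absurd hxr (by simpa using hex r hr)⟩
  by_cases hex : ∃ a a', a < a' ∧ x a = true ∧ x a' = true
  · obtain ⟨a, a', haa, ha, ha'⟩ := hex
    obtain ⟨T, hT⟩ := loc (a' + 1)
    obtain ⟨j, hj⟩ := hT a (by omega) ha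
    obtain ⟨i, hi⟩ := hT a' (by omega) ha'
    refine ⟨T, fun r hr => ?_⟩
    obtain ⟨T', hT'⟩ := loc (a' + r + 1)
    obtain ⟨j', hj'⟩ := hT' a (by omega) ha
    obtain ⟨i', hi'⟩ := hT' a' (by omega) ha'
    rw [pow_diff_unique haa hj hi hj' hi']
    exact hT' r (by omega) hr
  · push Not at hex
    by_cases h1 : ∃ a, x a = true
    · obtain ⟨a, ha⟩ := h1
      refine ⟨a + 8, fun r hr => ⟨0, ?_⟩⟩
      have e : r = a := by
        rcases lt_trichotomy r a with hlt | heq | hlt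
        · exact absurd ha (hex _ _ hlt hr)
        · exact heq
        · exact absurd hr (hex _ _ hlt ha)
      simp [e]
    · push Not at h1
      exact ⟨0, fun r hr => absurd hr (h1 r)⟩

/-- To find a long initial segment of `x ∈ XS` far out in `cs`, take the block whose number `n` has
the binary digits prescribed by `x` and one more digit `1` at a high place `K`. -/
lemma rec_of_mem {x : ℕ → Bool} (h : x ∈ XS) : Rec x := by
  obtain ⟨T, hT⟩ := h
  intro L M
  set K := T + L + M with hK
  let n := Nat.ofBits (n := K + 1) (fun i => if (i : ℕ) = K then true else
    (if 8 * 2 ^ (i : ℕ) ≤ T then x (T - 8 * 2 ^ (i : ℕ)) else false))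
  have hKK : K < 2 ^ K := Nat.lt_two_pow_self
  have hbit : ∀ i, n.testBit i = true ↔ i = K ∨ (8 * 2 ^ i ≤ T ∧ x (T - 8 * 2 ^ i) = true) := by
    intro i
    by_cases hi : i < K + 1
    · rw [Nat.testBit_ofBits_lt _ _ hi]
      by_cases h1 : i = K
      · simp [h1]
      · by_cases h2 : 8 * 2 ^ i ≤ T <;> simp [h1, h2]
    · rw [Nat.testBit_ofBits_ge _ _ (by omega)]
      have : i < 2 ^ i := Nat.lt_two_pow_self
      simp only [Bool.false_eq_true, false_iff, not_or, not_and]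
      exact ⟨by omega, fun h => by omega⟩
  have hn : 2 ^ K ≤ n := Nat.ge_two_pow_of_testBit ((hbit K).2 (Or.inl rfl))
  have hnT : K + n ≤ 8 * n ^ 2 := by nlinarith
  refine ⟨8 * n ^ 2 - T, by omega, fun r hr => ?_⟩
  rw [Bool.eq_iff_iff, cs_iff]
  constructor
  · rintro ⟨n', i', hb', he'⟩
    have hin' := Nat.ge_two_pow_of_testBit hb'
    have hi1' : 1 ≤ 2 ^ i' := Nat.one_le_two_pow
    have hEq : n' = n := by
      rcases lt_trichotomy n' n with hlt | heq | hlt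
      · have h1 : n' ^ 2 + n ≤ n ^ 2 := by nlinarith
        omega
      · exact heq
      · have h1 : n' + n ^ 2 + n ≤ n' ^ 2 := by nlinarith
        omega
    subst hEq
    rcases (hbit i').1 hb' with h | ⟨h1, h2⟩
    · subst h; omega
    · rwa [show r = T - 8 * 2 ^ i' by omega]
  · intro hxr
    obtain ⟨i, hi⟩ := hT r hxr
    refine ⟨n, i, (hbit i).2 (Or.inr ⟨by omega, ?_⟩), by omega⟩
    rwa [show T - 8 * 2 ^ i = r by omega]

/-! ### A topological description of `ω² + 1` -/

open Ordinal in
/-- An explicit bijection onto the ordinals up to `ω * ω`: `none` is the top, `some (a, none)` the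
limit ordinal `ω * (a + 1)`, and the `some (a, some n)` are the ordinals between `ω * a` and
`ω * (a + 1)` that are not limits; the ordinal `0` accounts for the case distinction. -/
def rk : Option (ℕ × Option ℕ) → Ordinal.{v}
  | none => ω * ω
  | some (a, none) => ω * ((a + 1 : ℕ) : Ordinal)
  | some (a, some n) => ω * (a : Ordinal) + ((if a = 0 then n else n + 1 : ℕ) : Ordinal)

open Ordinal in
lemma om_add_lt {a b n : ℕ} (h : a < b) : ω * (a : Ordinal.{v}) + (n : Ordinal) < ω * (b : Ordinal) := by
  calc ω * (a : Ordinal.{v}) + (n : Ordinal) < ω * (a : Ordinal) + ω := by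
        gcongr; exact natCast_lt_omega0 n
    _ = ω * ((a + 1 : ℕ) : Ordinal) := by push_cast; rw [mul_add_one]
    _ ≤ ω * (b : Ordinal) := by gcongr; exact h

open Ordinal in
lemma om_add_inj {a b n m : ℕ}
    (h : ω * (a : Ordinal.{v}) + (n : Ordinal) = ω * (b : Ordinal) + (m : Ordinal)) :
    a = b ∧ n = m := by
  have hab : a = b := by
    rcases lt_trichotomy a b with hlt | heq | hlt
    · have := (om_add_lt (n := n) hlt).trans_le (le_self_add (a := ω * (b : Ordinal)) (b := (m : Ordinal)))
      exact absurd h this.ne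
    · exact heq
    · have := (om_add_lt (n := m) hlt).trans_le (le_self_add (a := ω * (a : Ordinal)) (b := (n : Ordinal)))
      exact absurd h this.ne'
  subst hab
  refine ⟨rfl, ?_⟩
  simpa using h

open Ordinal in
lemma om_add_lt_sq (a n : ℕ) : ω * (a : Ordinal.{v}) + (n : Ordinal) < ω * ω :=
  (om_add_lt (Nat.lt_succ_self a)).trans (by gcongr; exacts [omega0_pos, natCast_lt_omega0 _])

/-- The normal form `ω * a + n` of `rk p` for `p ≠ none`. -/
def rkc : ℕ × Option ℕ → ℕ × ℕ
  | (a, none) => (a + 1, 0)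
  | (a, some n) => (a, if a = 0 then n else n + 1)

open Ordinal in
lemma rk_some (p : ℕ × Option ℕ) :
    rk (some p) = ω * ((rkc p).1 : Ordinal) + ((rkc p).2 : Ordinal) := by
  obtain ⟨a, _ | n⟩ := p
  · simp [rk, rkc]
  · rfl

lemma rkc_injective : Function.Injective rkc := by
  rintro ⟨a, _ | n⟩ ⟨b, _ | m⟩ h <;> simp only [rkc, Prod.mk.injEq] at h <;> obtain ⟨h1, h2⟩ := h
  · simp; omega
  · split_ifs at h2; omega
  · split_ifs at h2; omega
  · subst h1
    split_ifs at h2 <;> simp <;> omega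

lemma rk_injective : Function.Injective rk := by
  rintro (_ | p) (_ | q) h
  · rfl
  · rw [rk_some] at h; exact absurd h (om_add_lt_sq _ _).ne'
  · rw [rk_some] at h; exact absurd h (om_add_lt_sq _ _).ne
  · rw [rk_some, rk_some] at h
    rw [rkc_injective (Prod.ext (om_add_inj h).1 (om_add_inj h).2)]

open Ordinal in
lemma lt_sq_form {o : Ordinal.{v}} (h : o < ω * ω) :
    ∃ a n : ℕ, o = ω * (a : Ordinal) + (n : Ordinal) := by
  obtain ⟨a, ha⟩ := lt_omega0.1 ((lt_mul_iff_div_lt omega0_ne_zero).1 h)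
  obtain ⟨n, hn⟩ := lt_omega0.1 (mod_lt o omega0_ne_zero)
  exact ⟨a, n, by rw [← ha, ← hn, div_add_mod]⟩

open Ordinal in
lemma rk_surj {o : Ordinal.{v}} (h : o ≤ ω * ω) : ∃ p, rk p = o := by
  rcases h.eq_or_lt with rfl | h
  · exact ⟨none, rfl⟩
  · obtain ⟨a, n, rfl⟩ := lt_sq_form h
    by_cases ha : a = 0
    · exact ⟨some (a, some n), by simp [rk, ha]⟩
    · obtain ⟨a, rfl⟩ := Nat.exists_eq_succ_of_ne_zero ha
      cases n with
      | zero => exact ⟨some (a, none), by simp [rk]⟩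
      | succ n => exact ⟨some (a + 1, some n), by simp [rk]⟩

open Ordinal in
lemma rk_le (p : Option (ℕ × Option ℕ)) : rk p ≤ ω ^ (2 : Ordinal.{v}) := by
  rw [show (2 : Ordinal.{v}) = ((2 : ℕ) : Ordinal) by simp, opow_natCast, sq]
  rcases p with _ | p
  · exact le_rfl
  · rw [rk_some]; exact (om_add_lt_sq _ _).le

/-- A compact `T1` space split into a point, clopen sets indexed by `a : ℕ`, and in each of them
one distinguished point and a sequence of isolated points, is homeomorphic to `ω² + 1`. -/
lemma homeoOrd_of_code {X : Type*} [TopologicalSpace X] [CompactSpace X] [T1Space X]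
    (e : X ≃ Option (ℕ × Option ℕ))
    (hU : ∀ a, IsClopen {x | ∃ o, e x = some (a, o)})
    (hV : ∀ a n, IsOpen {x | e x = some (a, some n)}) :
    HomeoOrd X (Ordinal.omega0 ^ (2 : Ordinal.{v})) := by
  have hsq : Ordinal.omega0 ^ (2 : Ordinal.{v}) = Ordinal.omega0 * Ordinal.omega0 := by
    rw [show (2 : Ordinal.{v}) = ((2 : ℕ) : Ordinal) by simp, Ordinal.opow_natCast, sq]
  let g : X → OrdSpace (Ordinal.omega0 ^ (2 : Ordinal.{v})) := fun x => ⟨rk (e x), rk_le _⟩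
  have hg : Function.Bijective g := by
    constructor
    · intro x y h
      exact e.injective (rk_injective (congrArg Subtype.val h))
    · rintro ⟨o, ho⟩
      obtain ⟨p, hp⟩ := rk_surj (o := o) (hsq ▸ ho)
      exact ⟨e.symm p, Subtype.ext (by simp [g, hp])⟩
  have lt_iff : ∀ (x : X) (β : OrdSpace (Ordinal.omega0 ^ (2 : Ordinal.{v}))),
      (β < g x ↔ β.1 < rk (e x)) := fun _ _ => Iff.rfl
  have lt_iff' : ∀ (x : X) (β : OrdSpace (Ordinal.omega0 ^ (2 : Ordinal.{v}))),
      (g x < β ↔ rk (e x) < β.1) := fun _ _ => Iff.rfl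
  have hc : Continuous g := by
    rw [continuous_iff_continuousAt]
    intro x
    rcases hx : e x with _ | ⟨a, _ | n⟩
    · -- at the top point: all but finitely many clusters lie above a given `β < ω * ω`
      refine tendsto_order.2 ⟨fun β hβ => ?_, fun β hβ => ?_⟩
      · rw [lt_iff, hx] at hβ
        obtain ⟨a, n, hβ'⟩ := lt_sq_form hβ
        have : ∀ᶠ z in 𝓝 x, ∀ i ∈ Finset.range (a + 1), z ∈ {x | ∃ o, e x = some (i, o)}ᶜ := by
          rw [Filter.eventually_all_finset]
          intro i _
          exact (hU i).compl.isOpen.mem_nhds (by simp [hx])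
        filter_upwards [this] with z hz
        rw [lt_iff, hβ']
        rcases hez : e z with _ | ⟨i, o⟩
        · exact om_add_lt_sq _ _
        · have hi : a < i := by
            by_contra hcon
            exact hz i (by simp; omega) ⟨o, hez⟩
          rw [rk_some]
          refine (om_add_lt (b := (rkc (i, o)).1) ?_).trans_le le_self_add
          rcases o with _ | o <;> simp [rkc] <;> omega
      · rw [gt_iff_lt, lt_iff', hx] at hβ
        exact absurd (hβ.trans_le β.2) (by rw [hsq]; exact lt_irrefl _)
    · -- at a point of rank one: use its cluster minus finitely many isolated points
      have hUx : ∀ᶠ z in 𝓝 x, z ∈ {x | ∃ o, e x = some (a, o)} :=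
        (hU a).isOpen.mem_nhds ⟨none, hx⟩
      refine tendsto_order.2 ⟨fun β hβ => ?_, fun β hβ => ?_⟩
      · rw [lt_iff, hx] at hβ
        obtain ⟨b, m, hβ'⟩ := lt_sq_form (hβ.trans (by
          have := om_add_lt_sq (a+1) 0; simpa [rk] using this))
        have hba : b < a + 1 := by
          by_contra hcon
          refine absurd hβ (not_lt.2 ?_)
          rw [hβ']
          refine le_trans ?_ le_self_add
          simp only [rk]
          gcongr
          omega
        have : ∀ᶠ z in 𝓝 x, ∀ i ∈ Finset.range (m + 1), z ∈ ({e.symm (some (a, some i))} : Set X)ᶜ := by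
          rw [Filter.eventually_all_finset]
          intro i _
          refine isClosed_singleton.isOpen_compl.mem_nhds ?_
          intro h
          rw [h] at hx
          simp at hx
        filter_upwards [this, hUx] with z hz hzU
        obtain ⟨o, hez⟩ := hzU
        rw [lt_iff, hβ', hez]
        rcases o with _ | i
        · exact om_add_lt hba
        · have hi : m < i := by
            by_contra hcon
            exact hz i (by simp; omega) (by rw [mem_singleton_iff, ← hez]; simp)
          rw [rk_some]
          rcases Nat.lt_succ_iff_lt_or_eq.1 hba with hlt | rfl
          · exact (om_add_lt hlt).trans_le le_self_add
          · simp only [rkc]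
            gcongr
            split_ifs <;> omega
      · rw [gt_iff_lt, lt_iff', hx] at hβ
        filter_upwards [hUx] with z hz
        obtain ⟨o, hez⟩ := hz
        rw [lt_iff', hez]
        refine lt_of_le_of_lt ?_ hβ
        rcases o with _ | i
        · exact le_rfl
        · exact (om_add_lt (Nat.lt_succ_self a)).le
    · have : 𝓝 x = pure x := by
        rw [← isOpen_singleton_iff_nhds_eq_pure]
        convert hV a n using 1
        ext z
        simp only [mem_singleton_iff, mem_ofPred_eq, ← hx, e.injective.eq_iff]
      rw [ContinuousAt, this]
      exact tendsto_pure_nhds g x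
  exact ⟨Continuous.homeoOfEquivCompactToT2 (f := Equiv.ofBijective g hg) hc⟩

/-! ### The limit itineraries form a copy of `ω² + 1` -/

/-- `a` is the first place where `x` is `true`. -/
def First (a : ℕ) (x : ℕ → Bool) : Prop := x a = true ∧ ∀ i < a, x i = false

lemma First.unique {a b : ℕ} {x : ℕ → Bool} (ha : First a x) (hb : First b x) : a = b := by
  rcases lt_trichotomy a b with h | h | h
  · have := hb.2 a h; rw [ha.1] at this; cases this
  · exact h
  · have := ha.2 b h; rw [hb.1] at this; cases this

/-- The sequence that is `true` at `a` only. -/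
def single (a : ℕ) : ℕ → Bool := fun n => decide (n = a)

lemma single_mem (a : ℕ) : single a ∈ XS :=
  ⟨a + 8, fun r hr => ⟨0, by have : r = a := by simpa [single] using hr
                             simp [this]⟩⟩

lemma first_single (a : ℕ) : First a (single a) := by
  refine ⟨by simp [single], fun i hi => ?_⟩
  simp [single]; omega

lemma zero_mem : (fun _ => false : ℕ → Bool) ∈ XS := ⟨0, by simp [Adm]⟩

/-- The limit itineraries with first `true` at `a` and at least one more; these are isolated
in `XS`. -/
def Iso (a : ℕ) : Set (ℕ → Bool) := {x | x ∈ XS ∧ First a x ∧ ∃ a' > a, x a' = true}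

lemma countable_Iso (a : ℕ) : (Iso a).Countable := countable_XS.mono fun _ h => h.1

lemma infinite_Iso (a : ℕ) : (Iso a).Infinite := by
  let p : ℕ → ℕ → Bool := fun j n => decide (n = a ∨ n + 8 = a + 8 * 2 ^ (j + 1))
  have hgt : ∀ j, 2 ≤ 2 ^ (j + 1) := fun j => by
    rw [pow_succ]; have : 0 < 2 ^ j := by positivity
    omega
  refine infinite_of_injective_forall_mem (f := p) ?_ ?_
  · intro j k h
    have h1 := congrFun h (a + 8 * 2 ^ (j + 1) - 8)
    have hj := hgt j
    have hk := hgt k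
    simp only [p] at h1
    rw [decide_eq_decide] at h1
    have h2 := h1.1 (Or.inr (by omega))
    have h3 : 2 ^ (j + 1) = 2 ^ (k + 1) := by omega
    have := Nat.pow_right_injective le_rfl h3
    omega
  · intro j
    have hj := hgt j
    refine ⟨⟨a + 8 * 2 ^ (j + 1), fun r hr => ?_⟩, ⟨by simp [p], fun i hi => ?_⟩,
      a + 8 * 2 ^ (j + 1) - 8, by omega, ?_⟩
    · simp only [p, decide_eq_true_eq] at hr
      rcases hr with rfl | hr
      · exact ⟨j + 1, rfl⟩
      · exact ⟨0, by simpa using hr⟩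
    · simp only [p, decide_eq_false_iff_not]; omega
    · simp only [p, decide_eq_true_eq]; omega

lemma exists_enum (a : ℕ) : Nonempty (ℕ ≃ Iso a) := by
  have : Countable (Iso a) := (countable_Iso a).to_subtype
  have : Infinite (Iso a) := (infinite_Iso a).to_subtype
  exact nonempty_equiv_of_countable

/-- A chosen enumeration of `Iso a`. -/
def enum (a : ℕ) : ℕ ≃ Iso a := (exists_enum a).some

/-- The parametrization of `XS` matching the combinatorial description of `ω² + 1`. -/
def decode : Option (ℕ × Option ℕ) → XS
  | none => ⟨_, zero_mem⟩
  | some (a, none) => ⟨_, single_mem a⟩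
  | some (a, some n) => ⟨(enum a n).1, (enum a n).2.1⟩

lemma first_decode (a : ℕ) (o : Option ℕ) : First a (decode (some (a, o))).1 := by
  rcases o with _ | n
  · exact first_single a
  · exact (enum a n).2.2.1

lemma eq_single {a : ℕ} {x : ℕ → Bool} (h : First a x) (h' : ¬ ∃ a' > a, x a' = true) :
    x = single a := by
  push Not at h'
  funext n
  rcases lt_trichotomy n a with hn | hn | hn
  · rw [h.2 n hn]; simp [single]; omega
  · subst hn; rw [h.1]; simp [single]
  · have := h' n hn
    simp only [Bool.not_eq_true] at this
    rw [this]; simp [single]; omega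

lemma decode_bijective : Function.Bijective decode := by
  constructor
  · have hne : ∀ p, decode none ≠ decode (some p) := by
      rintro ⟨a, o⟩ h
      have := (first_decode a o).1
      rw [← h] at this
      cases this
    have hns : ∀ a n, (single a) ≠ (enum a n).1 := by
      intro a n h
      obtain ⟨a', ha, h'⟩ := (enum a n).2.2.2
      rw [← h] at h'
      simp [single] at h'
      omega
    rintro (_ | ⟨a, o⟩) (_ | ⟨b, o'⟩) h
    · rfl
    · exact absurd h (hne _)
    · exact absurd h.symm (hne _)
    · have hab : a = b := (first_decode a o).unique (h ▸ first_decode b o')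
      subst hab
      rcases o with _ | n <;> rcases o' with _ | m
      · rfl
      · exact absurd (congrArg Subtype.val h) (hns a m)
      · exact absurd (congrArg Subtype.val h).symm (hns a n)
      · have : enum a n = enum a m := Subtype.ext (congrArg (fun z : XS => z.1) h)
        rw [(enum a).injective this]
  · rintro ⟨x, hx⟩
    by_cases hz : ∃ a, x a = true
    · classical
      have hF : First (Nat.find hz) x :=
        ⟨Nat.find_spec hz, fun i hi => by simpa using Nat.find_min hz hi⟩
      generalize Nat.find hz = a at hF
      by_cases h' : ∃ a' > a, x a' = true
      · refine ⟨some (a, some ((enum a).symm ⟨x, hx, hF, h'⟩)), Subtype.ext ?_⟩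
        simp [decode]
      · exact ⟨some (a, none), Subtype.ext (eq_single hF h').symm⟩
    · push Not at hz
      refine ⟨none, Subtype.ext ?_⟩
      funext n
      exact (Bool.eq_false_of_not_eq_true (hz n)).symm

lemma eventually_agree (x : ℕ → Bool) (L : ℕ) : ∀ᶠ z in 𝓝 x, ∀ r < L, z r = x r := by
  have : ∀ᶠ z in 𝓝 x, ∀ r ∈ Finset.range L, z r = x r := by
    rw [Filter.eventually_all_finset]
    intro r _
    exact (continuous_apply r).continuousAt.eventually 
      (show ∀ᶠ t in 𝓝 (x r), t = x r by rw [nhds_discrete]; exact rfl)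
  simpa using this

lemma isClosed_XS : IsClosed XS := by
  rw [← closure_subset_iff_isClosed]
  intro x hx
  refine Rec.mem fun L M => ?_
  obtain ⟨z, hz, hzX⟩ := mem_closure_iff_nhds.1 hx _ (eventually_agree x L)
  obtain ⟨m, hm, h⟩ := rec_of_mem hzX L M
  exact ⟨m, hm, fun r hr => (h r hr).trans (hz r hr)⟩

lemma isClopen_coord (a : ℕ) (t : Bool) : IsClopen {x : ℕ → Bool | x a = t} :=
  (isClopen_discrete {t}).preimage (continuous_apply a)

lemma isClopen_First (a : ℕ) : IsClopen {x | First a x} := by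
  have : {x | First a x} = {x | x a = true} ∩ ⋂ i ∈ Finset.range a, {x | x i = false} := by
    ext x; simp [First]
  rw [this]
  exact (isClopen_coord a true).inter
    (isClopen_biInter_finset fun i _ => isClopen_coord i false)

lemma homeoOrd_XS : HomeoOrd XS (Ordinal.omega0 ^ (2 : Ordinal.{v})) := by
  have : CompactSpace XS := isCompact_iff_compactSpace.1 isClosed_XS.isCompact
  let e := (Equiv.ofBijective decode decode_bijective).symm
  have he : ∀ x p, e x = p ↔ x = decode p := fun x p => Equiv.symm_apply_eq _
  refine homeoOrd_of_code e (fun a => ?_) (fun a n => ?_)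
  · convert (isClopen_First a).preimage continuous_subtype_val using 1
    ext x
    constructor
    · rintro ⟨o, ho⟩
      rw [he] at ho
      rw [ho]; exact first_decode a o
    · intro hx
      rcases hex : e x with _ | ⟨b, o⟩
      · rw [he] at hex
        rw [hex] at hx
        cases hx.1
      · have h1 := (he _ _).1 hex
        rw [h1] at hx
        have : a = b := First.unique hx (first_decode b o)
        exact ⟨o, by rw [this]; exact hex⟩
  · obtain ⟨⟨T, hT⟩, hF, a', ha, h'⟩ := (enum a n).2
    let W : Set XS := Subtype.val ⁻¹' ({x | x a = true} ∩ {x | x a' = true})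
    have hWo : IsOpen W :=
      ((isClopen_coord a true).inter (isClopen_coord a' true)).isOpen.preimage continuous_subtype_val
    have hWf : W.Finite := by
      refine Finite.preimage Subtype.val_injective.injOn ?_ |>.subset
        (show W ⊆ Subtype.val ⁻¹' {x | Adm T x} from ?_)
      · exact finite_Adm T
      · rintro ⟨x, T', hT'⟩ ⟨h1, h2⟩
        have := hT.unique hT' ha hF.1 h' h1 h2
        subst this; exact hT'
    have hs : {x | e x = some (a, some n)} = W \ (W \ {decode (some (a, some n))}) := by
      ext x
      simp only [he, mem_ofPred_eq, Set.mem_sdiff, mem_singleton_iff, not_and, not_not]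
      constructor
      · rintro rfl
        exact ⟨⟨hF.1, h'⟩, fun _ => rfl⟩
      · rintro ⟨h1, h2⟩
        exact h2 h1
    rw [hs]
    exact hWo.sdiff (hWf.subset sdiff_subset).isClosed

/-! ### The map, its omega-limit set and its inhomogeneities -/

/-- The point of the unit interval with itinerary `u`; the projection only serves to have a
continuous map defined on all sequences. -/
def cd (u : ℕ → Bool) : unitI := projIcc 0 1 zero_le_one (Pv u)

lemma continuous_cd : Continuous cd :=
  continuous_projIcc.comp (continuous_const.add continuous_yv)

lemma cd_coe {u : ℕ → Bool} (h : Good u) : (cd u : ℝ) = Pv u := by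
  rw [cd, projIcc_of_mem zero_le_one (Pv_mem h)]

/-- The value at `0` of the map, a point with itinerary `cs`. -/
def bv : ℝ := Pv cs

lemma bv_nonneg : 0 ≤ bv := by
  have := Pv_true good_cs cs_zero
  unfold bv; linarith

lemma bv_le : bv ≤ 1/2 := by
  have := Pv_true good_cs cs_zero
  unfold bv; linarith

/-- The unimodal map of the theorem. -/
def fm (x : unitI) : unitI := ⟨Fm bv x, Fm_mem bv_nonneg bv_le x.2⟩

/-- The critical point `1/3` of `fm`. -/
def crit : unitI := ⟨1/3, by norm_num, by norm_num⟩

lemma continuous_fm : Continuous fm :=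
  ((continuous_Fm bv).comp continuous_subtype_val).subtype_mk _

lemma unimodal_fm : Unimodal fm crit := by
  refine ⟨continuous_fm, by norm_num [crit], by norm_num [crit], ?_, ?_⟩
  · intro x _ y hy hxy
    have hy' : (y : ℝ) ≤ 1/3 := hy
    have hxy' : (x : ℝ) < y := hxy
    have := Fm_expand_left bv_le hxy'.le hy'
    change Fm bv x < Fm bv y
    linarith
  · intro x hx y hy hxy
    have hx' : 1/3 ≤ (x : ℝ) := hx
    have hy' : 1/3 ≤ (y : ℝ) := hy
    have hxy' : (x : ℝ) < y := hxy
    change Fm bv y < Fm bv x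
    rw [Fm_right bv_le hx', Fm_right bv_le hy']
    linarith

lemma fm_iter_coe (n : ℕ) (x : unitI) : ((fm^[n] x : unitI) : ℝ) = (Fm bv)^[n] x := by
  induction n with
  | zero => rfl
  | succ n ih =>
    rw [Function.iterate_succ_apply', Function.iterate_succ_apply', ← ih]
    rfl

lemma leo_fm : LEO fm := by
  intro ε hε x
  obtain ⟨p, q, hpq, hp, hq, hb⟩ : ∃ p q : ℝ, p < q ∧ 0 ≤ p ∧ q ≤ 1 ∧
      ∀ z ∈ Icc p q, |z - x| < ε := by
    obtain ⟨x, hx0, hx1⟩ := x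
    rcases lt_or_ge x 1 with h | h
    · refine ⟨x, min 1 (x + ε/2), lt_min h (by linarith), hx0, min_le_left _ _, fun z hz => ?_⟩
      have := hz.2.trans (min_le_right _ _)
      rw [abs_lt]; constructor <;> linarith [hz.1]
    · refine ⟨max 0 (x - ε/2), x, max_lt (by linarith) (by linarith), le_max_left _ _, hx1,
        fun z hz => ?_⟩
      have := (le_max_right _ _).trans hz.1
      rw [abs_lt]; constructor <;> linarith [hz.2]
  obtain ⟨N, hN⟩ := Fm_leo bv_nonneg bv_le hpq hp hq
  refine ⟨N, eq_univ_of_forall fun y => ?_⟩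
  obtain ⟨z, hz, hzy⟩ := hN y.2
  refine ⟨⟨z, hp.trans hz.1, hz.2.trans hq⟩, ?_, ?_⟩
  · rw [Metric.mem_ball, Subtype.dist_eq, Real.dist_eq]
    exact hb z hz
  · apply Subtype.ext
    rw [fm_iter_coe]
    exact hzy

lemma fm_cd {u : ℕ → Bool} (h : Good u) : fm (cd u) = cd (sh 1 u) := by
  apply Subtype.ext
  rw [cd_coe (h.sh 1), ← Fm_Pv bv_le h, ← cd_coe h]
  rfl

lemma fm_iter_cd {u : ℕ → Bool} (h : Good u) (n : ℕ) : fm^[n] (cd u) = cd (sh n u) := by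
  induction n with
  | zero => rfl
  | succ n ih => rw [Function.iterate_succ_apply', ih, fm_cd (h.sh n), sh_sh, add_comm]

/-- The critical orbit is `1/3 → 1 → 0 → bv`, followed by the points coded by shifts of `cs`. -/
lemma orbit_crit (m : ℕ) : fm^[m + 3] crit = cd (sh m cs) := by
  rw [Function.iterate_add_apply, ← fm_iter_cd good_cs]
  congr 1
  apply Subtype.ext
  rw [cd_coe good_cs]
  have e1 : fm crit = ⟨1, by norm_num, by norm_num⟩ := Subtype.ext (Fm_crit bv_le)
  have e2 : fm ⟨1, by norm_num, by norm_num⟩ = ⟨0, by norm_num, by norm_num⟩ :=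
    Subtype.ext ((Fm_right bv_le (by norm_num)).trans (by norm_num))
  change ((fm (fm (fm crit)) : unitI) : ℝ) = bv
  rw [e1, e2]
  change Fm bv 0 = bv
  rw [Fm_left (by norm_num), mul_zero, add_zero, min_eq_left]
  have := bv_le
  linarith

lemma cd_injOn {u w : ℕ → Bool} (hu : Good u) (hw : Good w) (h : cd u = cd w) : u = w := by
  funext n
  have hn : cd (sh n u) = cd (sh n w) := by
    rw [← fm_iter_cd hu, ← fm_iter_cd hw, h]
  have hP : Pv (sh n u) = Pv (sh n w) := by
    rw [← cd_coe (hu.sh n), ← cd_coe (hw.sh n), hn]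
  have e : ∀ x : ℕ → Bool, x n = sh n x 0 := fun x => by simp [sh]
  rw [e u, e w]
  cases h1 : sh n u 0 <;> cases h2 : sh n w 0
  · rfl
  · have := Pv_false (hu.sh n) h1
    have := Pv_true (hw.sh n) h2
    linarith
  · have := Pv_true (hu.sh n) h1
    have := Pv_false (hw.sh n) h2
    linarith
  · rfl

lemma omega_eq : omegaLimitSet fm crit = cd '' XS := by
  apply Subset.antisymm
  · intro y hy
    have hcl : MapClusterPt y atTop (fun m => cd (sh m cs)) := by
      rw [mapClusterPt_iff_frequently]
      intro s hs
      rw [frequently_atTop]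
      intro a
      obtain ⟨_, hz, m, hm, rfl⟩ := mem_closure_iff_nhds.1 (mem_iInter.1 hy (a + 3)) s hs
      refine ⟨m - 3, by omega, ?_⟩
      rw [← orbit_crit, Nat.sub_add_cancel (by omega)]
      exact hz
    obtain ⟨U, hU, hUy⟩ := mapClusterPt_iff_ultrafilter.1 hcl
    obtain ⟨x, -, hx⟩ := isCompact_univ.ultrafilter_le_nhds (U.map (fun m => sh m cs)) (by simp)
    have hx' : Tendsto (fun m => sh m cs) U (𝓝 x) := hx
    refine ⟨x, Rec.mem fun L M => ?_, ?_⟩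
    · have h1 := hx'.eventually (eventually_agree x L)
      have h2 : ∀ᶠ m in (U : Filter ℕ), M ≤ m := hU (eventually_ge_atTop M)
      obtain ⟨m, hm1, hm2⟩ := (h1.and h2).exists
      exact ⟨m, hm2, hm1⟩
    · exact tendsto_nhds_unique ((continuous_cd.tendsto x).comp hx') hUy
  · rintro _ ⟨x, hx, rfl⟩
    have hrec := rec_of_mem hx
    choose m hm hmx using fun k => hrec k k
    have ht : Tendsto (fun k => sh (m k) cs) atTop (𝓝 x) := by
      rw [tendsto_pi_nhds]
      intro r
      refine tendsto_nhds_of_eventually_eq ?_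
      filter_upwards [eventually_gt_atTop r] with k hk
      exact hmx k r hk
    refine mem_iInter.2 fun n => ?_
    refine mem_closure_of_tendsto ((continuous_cd.tendsto x).comp ht) ?_
    filter_upwards [eventually_ge_atTop n] with k hk
    exact ⟨m k + 3, by have := hm k; omega, orbit_crit _⟩

lemma homeoOrd_omega :
    HomeoOrd (omegaLimitSet fm crit) (Ordinal.omega0 ^ (2 : Ordinal.{v})) := by
  obtain ⟨φ⟩ := homeoOrd_XS.{v}
  have : CompactSpace XS := isCompact_iff_compactSpace.1 isClosed_XS.isCompact
  let g : XS → omegaLimitSet fm crit := fun x => ⟨cd x, by rw [omega_eq]; exact ⟨x, x.2, rfl⟩⟩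
  have hg : Function.Bijective g := by
    constructor
    · intro x y h
      exact Subtype.ext (cd_injOn (XS_good x.2) (XS_good y.2) (congrArg Subtype.val h))
    · rintro ⟨y, hy⟩
      obtain ⟨x, hx, rfl⟩ := omega_eq ▸ hy
      exact ⟨⟨x, hx⟩, rfl⟩
  have hc : Continuous g := (continuous_cd.comp continuous_subtype_val).subtype_mk _
  exact ⟨(Continuous.homeoOfEquivCompactToT2 (f := Equiv.ofBijective g hg) hc).symm.trans φ⟩

lemma isClosed_omega : IsClosed (omegaLimitSet fm crit) :=
  isClosed_iInter fun _ => isClosed_closure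

lemma isClosed_InvLim : IsClosed (InvLim fm) := by
  have : InvLim fm = ⋂ i, {x | fm (x (i + 1)) = x i} := by ext; simp [InvLim]
  rw [this]
  exact isClosed_iInter fun i =>
    isClosed_eq (continuous_fm.comp (continuous_apply _)) (continuous_apply _)

lemma isClosed_Inhom : IsClosed (Inhom fm crit) := by
  have : Inhom fm crit =
      ⋂ n, {x : InvLim fm | (x : ℕ → unitI) n ∈ omegaLimitSet fm crit} := by
    ext; simp [Inhom]
  rw [this]
  exact isClosed_iInter fun n =>
    isClosed_omega.preimage ((continuous_apply n).comp continuous_subtype_val)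

/-- A backward orbit of itineraries, indexed by `i`, passing through `u` at `i = N`. Written as a
two-sided sequence with `u` on the right, it is zero on the left except, if `t` is `true`, for one
additional `true` at distance `8 * 2 ^ T` before `T`. -/
def thread (N T : ℕ) (u : ℕ → Bool) (t : Bool) (i n : ℕ) : Bool :=
  (decide (i ≤ n + N) && u (n + N - i)) || (t && decide (n + N + 8 * 2 ^ T = T + i))

lemma thread_adm {N T : ℕ} {u : ℕ → Bool} (h : Adm T u) (t : Bool) (i : ℕ) :
    Adm (T + i - N) (thread N T u t i) := by
  intro r hr
  simp only [thread, Bool.or_eq_true, Bool.and_eq_true, decide_eq_true_eq] at hr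
  rcases hr with ⟨h1, h2⟩ | ⟨-, h2⟩
  · obtain ⟨j, hj⟩ := h _ h2
    exact ⟨j, by omega⟩
  · exact ⟨T, by omega⟩

lemma sh_thread (N T : ℕ) (u : ℕ → Bool) (t : Bool) (i : ℕ) :
    sh 1 (thread N T u t (i + 1)) = thread N T u t i := by
  funext n
  rw [Bool.eq_iff_iff]
  simp only [sh, thread, Bool.or_eq_true, Bool.and_eq_true, decide_eq_true_eq]
  rw [show n + 1 + N - (i + 1) = n + N - i by omega,
    show i + 1 ≤ n + 1 + N ↔ i ≤ n + N by omega,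
    show n + 1 + N + 8 * 2 ^ T = T + (i + 1) ↔ n + N + 8 * 2 ^ T = T + i by omega]

lemma thread_N (N T : ℕ) (u : ℕ → Bool) (t : Bool) : thread N T u t N = u := by
  funext n
  have : T < 2 ^ T := Nat.lt_two_pow_self
  rw [Bool.eq_iff_iff]
  simp only [thread, Bool.or_eq_true, Bool.and_eq_true, decide_eq_true_eq]
  rw [show n + N - N = n by omega]
  constructor
  · rintro (h | ⟨-, h⟩)
    · exact h.2
    · omega
  · intro h
    exact Or.inl ⟨by omega, h⟩

lemma thread_ne (N T : ℕ) (u : ℕ → Bool) :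
    thread N T u true (N + 8 * 2 ^ T) ≠ thread N T u false (N + 8 * 2 ^ T) := by
  intro h
  have h1 := congrFun h T
  have : T < 2 ^ T := Nat.lt_two_pow_self
  have h2 : ¬ (N + 8 * 2 ^ T ≤ T + N) := by omega
  have h3 : T + N + 8 * 2 ^ T = T + (N + 8 * 2 ^ T) := by omega
  simp [thread, h2, h3] at h1

/-- The point of the inverse limit coded by `thread`. -/
def threadPt (N T : ℕ) (u : ℕ → Bool) (h : Adm T u) (t : Bool) : InvLim fm :=
  ⟨fun i => cd (thread N T u t i), fun i => by
    rw [fm_cd (thread_adm h t (i + 1)).good, sh_thread]⟩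

lemma threadPt_mem (N T : ℕ) (u : ℕ → Bool) (h : Adm T u) (t : Bool) :
    threadPt N T u h t ∈ Inhom fm crit := by
  intro n
  rw [omega_eq]
  exact ⟨_, ⟨_, thread_adm h t n⟩, rfl⟩

lemma invLim_iter (x : InvLim fm) (i k : ℕ) : fm^[k] (x.1 (i + k)) = x.1 i := by
  induction k with
  | zero => rfl
  | succ k ih =>
    rw [Function.iterate_succ_apply, ← add_assoc, x.2 (i + k), ih]

/-- Points of `𝓘` are not isolated: the two variants of `thread` agree with `z` up to the coordinate
`N`, and they are distinct, so one of them differs from `z`. -/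
lemma exists_other {z : InvLim fm} (hz : z ∈ Inhom fm crit) (N : ℕ) :
    ∃ y ∈ Inhom fm crit, y ≠ z ∧ ∀ i ≤ N, y.1 i = z.1 i := by
  have hN := hz N
  rw [omega_eq] at hN
  obtain ⟨u, ⟨T, hT⟩, hu⟩ := hN
  have agree : ∀ t, ∀ i ≤ N, (threadPt N T u hT t).1 i = z.1 i := by
    intro t i hi
    obtain ⟨k, rfl⟩ := Nat.exists_eq_add_of_le hi
    rw [← invLim_iter _ i k, ← invLim_iter z i k, ← hu]
    simp only [threadPt, thread_N]
  have hne : threadPt N T u hT true ≠ threadPt N T u hT false := by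
    intro h
    have h1 := congrFun (congrArg Subtype.val h) (N + 8 * 2 ^ T)
    exact thread_ne N T u (cd_injOn (thread_adm hT _ _).good (thread_adm hT _ _).good h1)
  by_cases h : threadPt N T u hT true = z
  · exact ⟨_, threadPt_mem N T u hT false, fun h' => hne (h.trans h'.symm), agree false⟩
  · exact ⟨_, threadPt_mem N T u hT true, h, agree true⟩

lemma cantor_Inhom : IsCantorSet (Inhom fm crit) := by
  have : CompactSpace (InvLim fm) := isCompact_iff_compactSpace.1 isClosed_InvLim.isCompact
  refine ⟨⟨_, threadPt_mem 0 0 (fun _ => false) (by simp [Adm]) false⟩,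
    isClosed_Inhom.isCompact, ⟨isClosed_Inhom, ?_⟩, ?_⟩
  · intro z hz
    rw [accPt_iff_nhds]
    intro U hU
    choose y hy hyz hag using exists_other hz
    have ht : Tendsto y atTop (𝓝 z) := by
      rw [tendsto_subtype_rng, tendsto_pi_nhds]
      intro i
      refine tendsto_nhds_of_eventually_eq ?_
      filter_upwards [eventually_ge_atTop i] with N hN
      exact hag N i hN
    obtain ⟨N, hN⟩ := (ht.eventually hU).exists
    exact ⟨y N, ⟨hN, hy N⟩, hyz N⟩
  · intro t ht hpre x hx y hy
    have hcount : (omegaLimitSet fm crit).Countable := by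
      rw [omega_eq]; exact countable_XS.image _
    refine Subtype.ext (funext fun n => ?_)
    have hcont : Continuous (fun w : InvLim fm => w.1 n) :=
      (continuous_apply n).comp continuous_subtype_val
    exact hcount.isTotallyDisconnected _ (image_subset_iff.2 fun w hw => ht hw n)
      (hpre.image _ hcont.continuousOn) (mem_image_of_mem _ hx) (mem_image_of_mem _ hy)

theorem stmt14 :
    ∃ (f : unitI → unitI) (c : unitI),
      Unimodal f c ∧ LEO f ∧
      HomeoOrd (omegaLimitSet f c) (Ordinal.omega0 ^ (2 : Ordinal)) ∧
      IsCantorSet (Inhom f c) :=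
  ⟨fm, crit, unimodal_fm, leo_fm, homeoOrd_omega, cantor_Inhom⟩

end
end

section
/- Let h : [0,1] → [0,1] be a unimodal, locally eventually onto map with critical point c, and let ε > 0. Then there is an integer N such that whenever x, y ∈ [0,1] \ P_h and I_h(x)|_N = I_h(y)|_N, it follows that |x − y| < ε. -/
/-!
Two non-precritical points `x`, `y` with the same itinerary up to time `N` span an interval whose
first `N` images never cross `c`: at each such time `h^k x` and `h^k y` lie strictly on one side of
`c`, where `h` is monotone, so `h^k` maps the interval between `x` and `y` into the interval between
`h^k x` and `h^k y` (`iterate_mem_uIcc`), which misses `c`.  On the other hand, by compactness the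
locally-eventually-onto property is uniform: finitely many balls of radius `ε / 4` cover `[0,1]`,
each is mapped onto `[0,1]` by some iterate, and an interval of length at least `ε` contains one of
them.  If `N` bounds the finitely many iterates, an interval of length at least `ε` has an image
containing `c` at some time at most `N`, so its endpoints cannot have the same itinerary up to `N`.
-/

open Set Filter

noncomputable section

/-- The itinerary symbol of `x` relative to the critical point `c`:
`some false` (i.e. `0`) if `x < c`, `some true` (i.e. `1`) if `x > c`,
and `none` (i.e. `*`) if `x = c`. -/
def itinSym (c x : unitI) : Option Bool :=
  if x < c then some false else if c < x then some true else none

/-- The itinerary of `x` under `h` (with critical point `c`). -/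
def itin (h : unitI → unitI) (c : unitI) (x : unitI) : ℕ → Option Bool :=
  fun k => itinSym c (h^[k] x)

/-- The set of precritical points: points whose itinerary contains the symbol `*`. -/
def precrit (h : unitI → unitI) (c : unitI) : Set unitI :=
  {x | ∃ k : ℕ, itin h c x k = none}

/-- Equal symbols other than `*` put both points strictly on the same side of `c`. -/
lemma same_side_of_itinSym_eq {c a b : unitI} (ha : itinSym c a ≠ none)
    (hab : itinSym c a = itinSym c b) : (a < c ∧ b < c) ∨ (c < a ∧ c < b) := by
  unfold itinSym at ha hab
  split_ifs at ha hab <;> simp_all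

lemma map_mem_uIcc_of_same_side {h : unitI → unitI} {c a b z : unitI} (hh : Unimodal h c)
    (hside : (a < c ∧ b < c) ∨ (c < a ∧ c < b)) (hz : z ∈ uIcc a b) :
    h z ∈ uIcc (h a) (h b) := by
  obtain ⟨-, -, -, hmono, hanti⟩ := hh
  rcases hside with ⟨ha, hb⟩ | ⟨ha, hb⟩
  · refine (hmono.monotoneOn.mono ?_).mapsTo_uIcc hz
    exact fun w hw => hw.2.trans (sup_le ha.le hb.le)
  · refine (hanti.antitoneOn.mono ?_).mapsTo_uIcc hz
    exact fun w hw => (le_inf ha.le hb.le).trans hw.1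

lemma iterate_mem_uIcc {h : unitI → unitI} {c x y z : unitI} (hh : Unimodal h c)
    (hz : z ∈ uIcc x y) (n : ℕ)
    (hside : ∀ k < n, (h^[k] x < c ∧ h^[k] y < c) ∨ (c < h^[k] x ∧ c < h^[k] y)) :
    h^[n] z ∈ uIcc (h^[n] x) (h^[n] y) := by
  induction n with
  | zero => simpa using hz
  | succ n ih =>
    simp only [Function.iterate_succ_apply']
    exact map_mem_uIcc_of_same_side hh (hside n n.lt_succ_self)
      (ih fun k hk => hside k (hk.trans n.lt_succ_self))

/-- The locally-eventually-onto property is uniform: one bound `N` on the time needed works for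
all intervals of length at least `ε`.  Only the covering of the point `c` is recorded. -/
lemma exists_uniform_hit {h : unitI → unitI} (hleo : LEO h) (c : unitI) {ε : ℝ} (hε : 0 < ε) :
    ∃ N : ℕ, ∀ x y : unitI, ε ≤ |(x : ℝ) - (y : ℝ)| →
      ∃ n ≤ N, ∃ z ∈ uIcc x y, h^[n] z = c := by
  choose T hT using hleo (ε / 4) (by positivity)
  obtain ⟨t, -, htfin, htcov⟩ :=
    (isCompact_univ (X := unitI)).finite_cover_balls (e := ε / 4) (by positivity)
  obtain ⟨N, hN⟩ := (htfin.image T).bddAbove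
  refine ⟨N, fun x y hxy => ?_⟩
  -- The midpoint of `x` and `y` lies in a covering ball, which then lies between `x` and `y`.
  let m : unitI := ⟨((x : ℝ) + y) / 2, by
    have := x.2; have := y.2; simp only [mem_Icc] at *; constructor <;> linarith⟩
  obtain ⟨p, hp, hmp⟩ := mem_iUnion₂.1 (htcov (mem_univ m))
  obtain ⟨z, hz, hzc⟩ : c ∈ h^[T p] '' Metric.ball p (ε / 4) := by
    rw [hT p]
    exact mem_univ c
  refine ⟨T p, hN (mem_image_of_mem T hp), z, ?_, hzc⟩
  rw [Metric.mem_ball, Subtype.dist_eq, Real.dist_eq, abs_lt] at hz hmp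
  change _ < ((x : ℝ) + y) / 2 - p ∧ ((x : ℝ) + y) / 2 - p < _ at hmp
  rw [mem_uIcc, ← Subtype.coe_le_coe, ← Subtype.coe_le_coe, ← Subtype.coe_le_coe,
    ← Subtype.coe_le_coe]
  rcases le_abs.1 hxy with hxy | hxy
  · right; constructor <;> linarith
  · left; constructor <;> linarith

theorem stmt15 (h : unitI → unitI) (c : unitI) (hh : Unimodal h c) (hleo : LEO h)
    (ε : ℝ) (hε : 0 < ε) :
    ∃ N : ℕ, ∀ x y : unitI, x ∉ precrit h c → y ∉ precrit h c →
      (∀ k ≤ N, itin h c x k = itin h c y k) → |(x : ℝ) - (y : ℝ)| < ε := by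
  obtain ⟨N, hN⟩ := exists_uniform_hit hleo c hε
  refine ⟨N, fun x y hx _ hxy => ?_⟩
  by_contra hlt
  obtain ⟨n, hn, z, hz, hzc⟩ := hN x y (not_lt.1 hlt)
  have hside : ∀ k ≤ N, (h^[k] x < c ∧ h^[k] y < c) ∨ (c < h^[k] x ∧ c < h^[k] y) :=
    fun k hk => same_side_of_itinSym_eq (fun hnone => hx ⟨k, hnone⟩) (hxy k hk)
  have hmem := iterate_mem_uIcc hh hz n fun k hk => hside k (hk.le.trans hn)
  rw [hzc, mem_uIcc] at hmem
  rcases hside n hn with ⟨h1, h2⟩ | ⟨h1, h2⟩ <;> rcases hmem with ⟨h3, h4⟩ | ⟨h3, h4⟩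
  · exact absurd h4 h2.not_ge
  · exact absurd h4 h1.not_ge
  · exact absurd h3 h1.not_ge
  · exact absurd h3 h2.not_ge

end
end
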